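/- arXiv:2303.09533 — 2 statements merged into one kernel-verified Lean document; each statement's English description precedes it below -/
import Mathlib

section
/- Every 9-dimensional finite-volume right-angled convex hyperbolic polyhedron has at least 152 facets, and every 11-dimensional finite-volume right-angled convex hyperbolic polyhedron has at least 564 facets. -/
open scoped BigOperators

noncomputable section

/-- The Minkowski bilinear form `⟨x,y⟩ = -x₀y₀ + x₁y₁ + ⋯ + xₙyₙ` on `ℝ^{n+1}`. -/
def mink {n : ℕ} (x y : Fin (n + 1) → ℝ) : ℝ :=
  -(x 0 * y 0) + ∑ i : Fin n, x i.succ * y i.succ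

/-- The hyperboloid model of the hyperbolic space `ℍⁿ`. -/
def Hyperboloid (n : ℕ) : Set (Fin (n + 1) → ℝ) :=
  {x | mink x x = -1 ∧ 0 < x 0}

/-- The Klein projection `x ↦ (x₁/x₀, …, xₙ/x₀)` of the hyperboloid onto the unit ball. -/
def kleinMap {n : ℕ} (x : Fin (n + 1) → ℝ) : EuclideanSpace ℝ (Fin n) :=
  WithLp.toLp 2 fun i => x i.succ / x 0

/-- Dimension of a subset of a real vector space: the rank of its vector span. -/
def sdim {n : ℕ} (s : Set (EuclideanSpace ℝ (Fin n))) : ℕ :=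
  Module.finrank ℝ (vectorSpan ℝ s)

/-- A convex hyperbolic `n`-polyhedron: a finite intersection of hyperbolic half-spaces
`H_{eᵢ}⁻ = {x : ⟨eᵢ,x⟩ ≤ 0}` (with `⟨eᵢ,eᵢ⟩ = 1`) having nonempty interior
(equivalently, its Klein-model image has nonempty interior in `ℝⁿ`). -/
structure HypPolyhedron (n : ℕ) where
  m : ℕ
  e : Fin m → (Fin (n + 1) → ℝ)
  unit : ∀ i, mink (e i) (e i) = 1
  nonempty_int :
    (interior (kleinMap '' {x ∈ Hyperboloid n | ∀ i, mink (e i) x ≤ 0})).Nonempty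

namespace HypPolyhedron

variable {n : ℕ} (P : HypPolyhedron n)

/-- The set of points of the polyhedron in the hyperboloid model. -/
def carrier : Set (Fin (n + 1) → ℝ) :=
  {x ∈ Hyperboloid n | ∀ i, mink (P.e i) x ≤ 0}

/-- `P̄`: the closure of the Klein-model image of the polyhedron in the closed unit ball. -/
def cl : Set (EuclideanSpace ℝ (Fin n)) :=
  closure (kleinMap '' P.carrier)

/-- The `k`-faces of `P`: the `k`-dimensional (nonempty) exposed faces of `P̄`. -/
def faces (k : ℕ) : Set (Set (EuclideanSpace ℝ (Fin n))) :=
  {F | IsExposed ℝ P.cl F ∧ F.Nonempty ∧ sdim F = k}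

/-- `a_k(P)`: the number of `k`-faces of `P`. -/
def a (k : ℕ) : ℕ := (P.faces k).ncard

/-- Vertices of `P`: the points of `0`-dimensional exposed faces of `P̄`. -/
def verts : Set (EuclideanSpace ℝ (Fin n)) :=
  {v | IsExposed ℝ P.cl {v}}

/-- Ideal vertices: vertices lying on the unit sphere. -/
def idealVerts : Set (EuclideanSpace ℝ (Fin n)) :=
  {v ∈ P.verts | ‖v‖ = 1}

/-- Finite vertices: vertices lying in the open unit ball. -/
def finiteVerts : Set (EuclideanSpace ℝ (Fin n)) :=
  {v ∈ P.verts | ‖v‖ < 1}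

/-- `v_∞(P)`: the number of ideal vertices of `P`. -/
def vInf : ℕ := P.idealVerts.ncard

/-- The bounding hyperplane `H_e` contains the face `F`. -/
def faceInHyperplane (e : Fin (n + 1) → ℝ) (F : Set (EuclideanSpace ℝ (Fin n))) : Prop :=
  ∀ x ∈ P.carrier, kleinMap x ∈ F → mink e x = 0

/-- `P` is right-angled: whenever two distinct bounding hyperplanes both contain an
`(n-2)`-dimensional face of `P`, the corresponding unit normals are orthogonal,
i.e. the dihedral angle is `π/2`. -/
def IsRightAngled : Prop :=
  ∀ i j : Fin P.m, i ≠ j →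
    (∃ F ∈ P.faces (n - 2), P.faceInHyperplane (P.e i) F ∧ P.faceInHyperplane (P.e j) F) →
    mink (P.e i) (P.e j) = 0

/-- `P` has finite volume: `P̄` is the convex hull of its (finitely many) vertices. -/
def FiniteVolume : Prop :=
  P.verts.Finite ∧ P.cl = convexHull ℝ P.verts

/-- `P` is compact: finite volume and all vertices are finite. -/
def IsCompactPoly : Prop :=
  P.FiniteVolume ∧ ∀ v ∈ P.verts, ‖v‖ < 1

/-- `P` is ideal: finite volume and all vertices are ideal. -/
def IsIdeal : Prop :=
  P.FiniteVolume ∧ ∀ v ∈ P.verts, ‖v‖ = 1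

end HypPolyhedron

/-- `ν(P) = a_{n-1}(P) + v_∞(P)` ranging over the family `𝒫ⁿ` of finite-volume non-compact
right-angled convex hyperbolic `n`-polyhedra. -/
def nuSet (n : ℕ) : Set ℕ :=
  {m | ∃ P : HypPolyhedron n,
        P.FiniteVolume ∧ P.IsRightAngled ∧ ¬ P.IsCompactPoly ∧ P.a (n - 1) + P.vInf = m}

/-- `νₙ = sInf {ν(P) : P ∈ 𝒫ⁿ}` (with `sInf ∅ = 0`). -/
def nu (n : ℕ) : ℕ := sInf (nuSet n)

/-! ### The Minkowski form -/

section Minkowski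

variable {n : ℕ}

lemma mink_comm (x y : Fin (n + 1) → ℝ) : mink x y = mink y x := by
  simp [mink, mul_comm]

@[simp] lemma mink_add_left (x y z : Fin (n + 1) → ℝ) :
    mink (x + y) z = mink x z + mink y z := by
  simp only [mink, Pi.add_apply, add_mul, Finset.sum_add_distrib]; ring

@[simp] lemma mink_smul_left (c : ℝ) (x z : Fin (n + 1) → ℝ) :
    mink (c • x) z = c * mink x z := by
  simp only [mink, Pi.smul_apply, smul_eq_mul, mul_add, Finset.mul_sum, mul_assoc]; ring

@[simp] lemma mink_add_right (x y z : Fin (n + 1) → ℝ) :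
    mink x (y + z) = mink x y + mink x z := by
  rw [mink_comm, mink_add_left, mink_comm y, mink_comm z]

@[simp] lemma mink_smul_right (c : ℝ) (x z : Fin (n + 1) → ℝ) :
    mink x (c • z) = c * mink x z := by
  rw [mink_comm, mink_smul_left, mink_comm z]

/-- The functional `y ↦ ⟨x, y⟩`. -/
def minkLin (x : Fin (n + 1) → ℝ) : (Fin (n + 1) → ℝ) →ₗ[ℝ] ℝ where
  toFun := mink x
  map_add' := mink_add_right x
  map_smul' c y := mink_smul_right c x y

@[simp] lemma minkLin_apply (x y : Fin (n + 1) → ℝ) : minkLin x y = mink x y := rfl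

@[simp] lemma mink_zero_right (x : Fin (n + 1) → ℝ) : mink x 0 = 0 := (minkLin x).map_zero

@[simp] lemma mink_zero_left (x : Fin (n + 1) → ℝ) : mink 0 x = 0 := by
  rw [mink_comm, mink_zero_right]

@[simp] lemma mink_neg_right (x y : Fin (n + 1) → ℝ) : mink x (-y) = -mink x y :=
  (minkLin x).map_neg y

@[simp] lemma mink_neg_left (x y : Fin (n + 1) → ℝ) : mink (-x) y = -mink x y := by
  rw [mink_comm, mink_neg_right, mink_comm]

@[simp] lemma mink_sub_right (x y z : Fin (n + 1) → ℝ) :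
    mink x (y - z) = mink x y - mink x z := (minkLin x).map_sub y z

@[simp] lemma mink_sub_left (x y z : Fin (n + 1) → ℝ) :
    mink (x - y) z = mink x z - mink y z := by
  rw [mink_comm, mink_sub_right, mink_comm z, mink_comm z]

@[simp] lemma mink_sum_right {ι : Type*} (s : Finset ι) (x : Fin (n + 1) → ℝ)
    (f : ι → Fin (n + 1) → ℝ) : mink x (∑ i ∈ s, f i) = ∑ i ∈ s, mink x (f i) :=
  map_sum (minkLin x) f s

@[simp] lemma mink_sum_left {ι : Type*} (s : Finset ι) (x : Fin (n + 1) → ℝ)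
    (f : ι → Fin (n + 1) → ℝ) : mink (∑ i ∈ s, f i) x = ∑ i ∈ s, mink (f i) x := by
  rw [mink_comm, mink_sum_right]; simp only [mink_comm]

lemma continuous_mink (x : Fin (n + 1) → ℝ) : Continuous (mink x) := by
  unfold mink; fun_prop

lemma mink_self_eq (x : Fin (n + 1) → ℝ) :
    mink x x = -(x 0) ^ 2 + ∑ i : Fin n, x i.succ ^ 2 := by
  simp only [mink, sq]

lemma mink_self_nonneg_of_zero {w : Fin (n + 1) → ℝ} (hw : w 0 = 0) : 0 ≤ mink w w := by
  rw [mink_self_eq, hw]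
  simpa using Finset.sum_nonneg fun i _ => sq_nonneg (w (Fin.succ i))

lemma eq_zero_of_mink_self_nonpos {w : Fin (n + 1) → ℝ} (hw : w 0 = 0) (h : mink w w ≤ 0) :
    w = 0 := by
  rw [mink_self_eq, hw] at h
  have h0 : ∑ i : Fin n, w i.succ ^ 2 = 0 :=
    le_antisymm (by simpa using h) (Finset.sum_nonneg fun i _ => sq_nonneg _)
  rw [Finset.sum_eq_zero_iff_of_nonneg fun i _ => sq_nonneg _] at h0
  funext i
  refine Fin.cases hw (fun j => ?_) i
  simpa using h0 j (Finset.mem_univ _)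

lemma time_ne_zero_of_causal {x : Fin (n + 1) → ℝ} (hx : mink x x ≤ 0) (h0 : x ≠ 0) :
    x 0 ≠ 0 := fun h => h0 (eq_zero_of_mink_self_nonpos h hx)

lemma mink_self_decomp {x y : Fin (n + 1) → ℝ} (h : mink x y = 0) (s : ℝ) :
    mink y y = mink (y - s • x) (y - s • x) - s ^ 2 * mink x x := by
  simp [mink_comm y x, h]; ring

/-- A vector orthogonal to a causal vector is not timelike. -/
lemma mink_self_nonneg_of_orth {x y : Fin (n + 1) → ℝ} (hx : mink x x ≤ 0) (hx0 : x 0 ≠ 0)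
    (h : mink x y = 0) : 0 ≤ mink y y := by
  rw [mink_self_decomp h (y 0 / x 0)]
  have := mink_self_nonneg_of_zero (w := y - (y 0 / x 0) • x) (by simp [hx0])
  nlinarith [mul_nonneg (sq_nonneg (y 0 / x 0)) (neg_nonneg.2 hx)]

/-- A causal vector orthogonal to a causal vector is proportional to it. -/
lemma exists_eq_smul_of_orth {x y : Fin (n + 1) → ℝ} (hx : mink x x ≤ 0) (hx0 : x 0 ≠ 0)
    (h : mink x y = 0) (hy : mink y y ≤ 0) : ∃ s : ℝ, y = s • x := by
  refine ⟨y 0 / x 0, ?_⟩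
  rw [mink_self_decomp h (y 0 / x 0)] at hy
  refine sub_eq_zero.1 (eq_zero_of_mink_self_nonpos (by simp [hx0]) ?_)
  nlinarith [mul_nonneg (sq_nonneg (y 0 / x 0)) (neg_nonneg.2 hx)]

lemma eq_zero_of_orth_timelike {x y : Fin (n + 1) → ℝ} (hx : mink x x < 0)
    (h : mink x y = 0) (hy : mink y y ≤ 0) : y = 0 := by
  have hx0 : x 0 ≠ 0 := time_ne_zero_of_causal hx.le (by rintro rfl; simp at hx)
  obtain ⟨s, rfl⟩ := exists_eq_smul_of_orth hx.le hx0 h hy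
  have : s = 0 := by
    rw [mink_smul_right] at h
    exact (mul_eq_zero.1 h).resolve_right hx.ne
  simp [this]

/-- Two future causal vectors have nonpositive product. -/
lemma mink_nonpos_of_causal {x y : Fin (n + 1) → ℝ} (hx : mink x x ≤ 0) (hx0 : 0 ≤ x 0)
    (hy : mink y y ≤ 0) (hy0 : 0 ≤ y 0) : mink x y ≤ 0 := by
  rw [mink_self_eq] at hx hy
  have hcs := Finset.sum_mul_sq_le_sq_mul_sq Finset.univ (fun i : Fin n => x i.succ)
    (fun i => y i.succ)
  have h1 : (∑ i : Fin n, x i.succ * y i.succ) ^ 2 ≤ (x 0 * y 0) ^ 2 := by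
    refine hcs.trans ?_
    rw [mul_pow]
    exact mul_le_mul (by linarith) (by linarith)
      (Finset.sum_nonneg fun i _ => sq_nonneg _) (sq_nonneg _)
  have h2 := abs_le_of_sq_le_sq h1 (mul_nonneg hx0 hy0)
  rw [mink]
  linarith [(abs_le.1 h2).2]

lemma mink_neg_of_timelike {x y : Fin (n + 1) → ℝ} (hx : mink x x < 0) (hx0 : 0 ≤ x 0)
    (hy : mink y y ≤ 0) (hy0 : 0 < y 0) : mink x y < 0 := by
  refine lt_of_le_of_ne (mink_nonpos_of_causal hx.le hx0 hy hy0.le) fun h => ?_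
  have := eq_zero_of_orth_timelike hx h hy
  simp [this] at hy0

lemma time_pos_of_mink_neg {x p : Fin (n + 1) → ℝ} (hx : mink x x ≤ 0) (hp : mink p p ≤ 0)
    (hp0 : 0 ≤ p 0) (h : mink x p < 0) : 0 < x 0 := by
  by_contra! hx0
  have := mink_nonpos_of_causal (x := -x) (y := p) (by simpa using hx) (by simpa using hx0) hp hp0
  simp at this
  linarith

end Minkowski

/-! ### Abstract right-angled systems of normals -/

lemma exists_pos_forall_add_mul_nonpos {ι : Type*} (s : Finset ι) (f g : ι → ℝ)
    (hf : ∀ i ∈ s, f i ≤ 0) (hg : ∀ i ∈ s, f i = 0 → g i ≤ 0) :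
    ∃ ε : ℝ, 0 < ε ∧ ∀ i ∈ s, f i + ε * g i ≤ 0 := by
  have key : ∀ᶠ ε in nhdsWithin (0 : ℝ) (Set.Ioi 0), ∀ i ∈ s, f i + ε * g i ≤ 0 := by
    rw [Filter.eventually_all_finset]
    intro i hi
    rcases (hf i hi).lt_or_eq with h | h
    · have hc : Filter.Tendsto (fun ε : ℝ => f i + ε * g i) (nhdsWithin 0 (Set.Ioi 0))
          (nhds (f i + 0 * g i)) :=
        (Continuous.tendsto (by fun_prop) 0).mono_left nhdsWithin_le_nhds
      filter_upwards [hc.eventually_lt_const (by simpa using h)] with ε hε using hε.le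
    · filter_upwards [self_mem_nhdsWithin] with ε hε
      rw [h, zero_add]
      exact mul_nonpos_of_nonneg_of_nonpos (le_of_lt hε) (hg i hi h)
  obtain ⟨ε, h1, h2⟩ := (key.and self_mem_nhdsWithin).exists
  exact ⟨ε, h2, h1⟩

/-- Unit outward normals of a right-angled polyhedron of finite volume with interior point `y`:
the cone they cut out lies in the closed future light cone. -/
structure RASystem {n : ℕ} {ι : Type*} (e : ι → Fin (n + 1) → ℝ) (y : Fin (n + 1) → ℝ) :
    Prop where
  unit : ∀ i, mink (e i) (e i) = 1
  gram : ∀ i j, i ≠ j → mink (e i) (e j) = 0 ∨ mink (e i) (e j) ≤ -1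
  neg : ∀ i, mink (e i) y < 0
  timelike : mink y y < 0
  future : 0 < y 0
  cone : ∀ x, (∀ i, mink (e i) x ≤ 0) → 0 ≤ x 0 ∧ mink x x ≤ 0

namespace RASystem

variable {n : ℕ} {ι : Type*} {e : ι → Fin (n + 1) → ℝ} {y : Fin (n + 1) → ℝ}

lemma gram_nonpos (h : RASystem e y) {i j : ι} (hij : i ≠ j) : mink (e i) (e j) ≤ 0 := by
  rcases h.gram i j hij with h | h <;> linarith

lemma exists_pos_of_ne (h : RASystem e y) {x : Fin (n + 1) → ℝ} (hx : x 0 < 0 ∨ 0 < mink x x) :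
    ∃ i, 0 < mink (e i) x := by
  by_contra! hc
  rcases hx with hx | hx <;> linarith [(h.cone x hc).1, (h.cone x hc).2]

/-- The orthogonal projection of the interior point to the face cut out by a clique. -/
lemma exists_face_point (h : RASystem e y) (T : Finset ι)
    (hT : ∀ i ∈ T, ∀ j ∈ T, i ≠ j → mink (e i) (e j) = 0) :
    ∃ x : Fin (n + 1) → ℝ, (∀ i ∈ T, mink (e i) x = 0) ∧ (∀ i ∉ T, mink (e i) x < 0) ∧
      mink x x < 0 ∧ 0 < x 0 := by
  classical
  set x := y - ∑ i ∈ T, mink (e i) y • e i with hx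
  have h1 : ∀ i ∈ T, mink (e i) x = 0 := by
    intro i hi
    rw [hx, mink_sub_right, mink_sum_right, Finset.sum_eq_single_of_mem i hi]
    · simp [h.unit]
    · intro j hj hji
      simp [hT i hi j hj hji.symm]
  have h2 : ∀ i ∉ T, mink (e i) x < 0 := by
    intro i hi
    rw [hx, mink_sub_right, mink_sum_right]
    have : 0 ≤ ∑ j ∈ T, mink (e i) (mink (e j) y • e j) := by
      refine Finset.sum_nonneg fun j hj => ?_
      rw [mink_smul_right]
      exact mul_nonneg_of_nonpos_of_nonpos (h.neg j).le
        (h.gram_nonpos (by rintro rfl; exact hi hj))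
    linarith [h.neg i]
  have h3 : mink x x < 0 := by
    have e1 : mink x x = mink x y := by
      conv_lhs => rw [hx]
      rw [← hx, mink_sub_right, mink_sum_right, Finset.sum_eq_zero, sub_zero]
      intro i hi
      rw [mink_smul_right, mink_comm x, h1 i hi, mul_zero]
    rw [e1, hx, mink_sub_left, mink_sum_left]
    have : 0 ≤ ∑ j ∈ T, mink (mink (e j) y • e j) y :=
      Finset.sum_nonneg fun j hj => by rw [mink_smul_left]; exact mul_self_nonneg _
    linarith [h.timelike]
  have h4 := h.cone x fun i => by
    by_cases hi : i ∈ T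
    · exact (h1 i hi).le
    · exact (h2 i hi).le
  exact ⟨x, h1, h2, h3, lt_of_le_of_ne h4.1
    (time_ne_zero_of_causal h3.le (by rintro h; rw [h] at h3; simp at h3)).symm⟩

/-- Leaving the cone along a ray. -/
lemma exists_exit [Fintype ι] {x z : Fin (n + 1) → ℝ} (hx : ∀ i, mink (e i) x ≤ 0)
    (hz : ∃ i, 0 < mink (e i) z) :
    ∃ t : ℝ, 0 ≤ t ∧ ∃ i, 0 < mink (e i) z ∧ mink (e i) (x + t • z) = 0 ∧
      ∀ j, mink (e j) (x + t • z) ≤ 0 := by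
  classical
  obtain ⟨i0, hi0⟩ := hz
  obtain ⟨i, hi, hmin⟩ := Finset.exists_min_image
    (Finset.univ.filter fun i => 0 < mink (e i) z) (fun i => -mink (e i) x / mink (e i) z)
    ⟨i0, by simpa using hi0⟩
  simp only [Finset.mem_filter, Finset.mem_univ, true_and] at hi hmin
  have ht : 0 ≤ -mink (e i) x / mink (e i) z := div_nonneg (by linarith [hx i]) hi.le
  refine ⟨_, ht, i, hi, ?_, fun j => ?_⟩
  · simp; field_simp; ring
  · rw [mink_add_right, mink_smul_right]
    rcases lt_or_ge 0 (mink (e j) z) with hj | hj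
    · have := mul_le_mul_of_nonneg_right (hmin j hj) hj.le
      rw [div_mul_cancel₀ _ hj.ne'] at this
      linarith
    · linarith [hx j, mul_nonpos_of_nonneg_of_nonpos ht hj]

lemma add_ne_zero (h : RASystem e y) (i j : ι) : e i + e j ≠ 0 := by
  intro h0
  have : mink (e i + e j) y = 0 := by rw [h0, mink_zero_left]
  rw [mink_add_left] at this
  linarith [h.neg i, h.neg j]

lemma orth_of_timelike (h : RASystem e y) {x : Fin (n + 1) → ℝ} (hx : mink x x < 0) {i j : ι}
    (hij : i ≠ j) (hi : mink (e i) x = 0) (hj : mink (e j) x = 0) : mink (e i) (e j) = 0 := by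
  refine (h.gram i j hij).resolve_right fun hc => h.add_ne_zero i j ?_
  refine eq_zero_of_orth_timelike hx ?_ ?_
  · rw [mink_add_right, mink_comm x, mink_comm x, hi, hj, add_zero]
  · simp [h.unit, mink_comm (e j) (e i)]; linarith

/-- An ideal point of the cone is isolated. -/
lemma isolated [Fintype ι] (h : RASystem e y) {p z : Fin (n + 1) → ℝ}
    (hp : ∀ i, mink (e i) p ≤ 0)
    (hpp : mink p p = 0) (hpz : mink p z = 0) (hz : ∀ i, mink (e i) p = 0 → mink (e i) z ≤ 0) :
    mink z z ≤ 0 := by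
  obtain ⟨ε, hε, H⟩ := exists_pos_forall_add_mul_nonpos Finset.univ (fun i => mink (e i) p)
    (fun i => mink (e i) z) (fun i _ => hp i) fun i _ => hz i
  have := (h.cone (p + ε • z) fun i => by simpa using H i (Finset.mem_univ i)).2
  simp [hpp, hpz, mink_comm z p] at this
  by_contra! hc
  linarith [mul_pos hε (mul_pos hε hc)]

lemma exists_smul_of_not_orth (h : RASystem e y) {p : Fin (n + 1) → ℝ} (hpp : mink p p = 0)
    (hp0 : 0 < p 0) {i j : ι} (hij : i ≠ j) (hi : mink (e i) p = 0) (hj : mink (e j) p = 0)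
    (hne : mink (e i) (e j) ≠ 0) :
    mink (e i) (e j) = -1 ∧ ∃ c : ℝ, 0 < c ∧ e i + e j = c • p := by
  have hle := (h.gram i j hij).resolve_left hne
  have hn : mink (e i + e j) (e i + e j) = 2 + 2 * mink (e i) (e j) := by
    simp [h.unit, mink_comm (e j) (e i)]; ring
  obtain ⟨c, hc⟩ := exists_eq_smul_of_orth hpp.le hp0.ne' (y := e i + e j)
    (by rw [mink_add_right, mink_comm p, mink_comm p, hi, hj, add_zero]) (by rw [hn]; linarith)
  refine ⟨?_, c, ?_, hc⟩
  · rw [hc] at hn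
    simp [hpp] at hn
    linarith
  · have h1 : mink (e i + e j) y < 0 := by
      rw [mink_add_left]; linarith [h.neg i, h.neg j]
    rw [hc, mink_smul_left] at h1
    have h2 := mink_neg_of_timelike h.timelike h.future.le hpp.le hp0
    rw [mink_comm] at h2
    by_contra! hc0
    linarith [mul_nonneg_of_nonpos_of_nonpos hc0 h2.le]

lemma exists_opposite [Fintype ι] (h : RASystem e y) {p : Fin (n + 1) → ℝ}
    (hp : ∀ i, mink (e i) p ≤ 0)
    (hpp : mink p p = 0) (hp0 : 0 < p 0) {i : ι} (hi : mink (e i) p = 0) :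
    ∃ j, mink (e j) p = 0 ∧ mink (e i) (e j) = -1 ∧ ∃ c : ℝ, 0 < c ∧ e i + e j = c • p := by
  by_contra! hc
  have := h.isolated hp hpp (z := -e i) (by simp [mink_comm p, hi]) fun j hj => by
    by_contra! hlt
    rw [mink_neg_right, mink_comm] at hlt
    have hij : i ≠ j := by
      rintro rfl
      linarith [h.unit i]
    obtain ⟨h1, c, h2, h3⟩ := h.exists_smul_of_not_orth hpp hp0 hij hi hj (by linarith)
    exact hc j hj h1 c h2 h3
  simp [h.unit] at this
  linarith

lemma eq_of_opposite (h : RASystem e y) {p : Fin (n + 1) → ℝ} (hpp : mink p p = 0)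
    {i j k : ι} (hi : mink (e i) p = 0) {c c' : ℝ} (hj : e i + e j = c • p)
    (hk : e i + e k = c' • p) : j = k := by
  by_contra hjk
  have e1 : e j = c • p - e i := eq_sub_of_add_eq' hj
  have e2 : e k = c' • p - e i := eq_sub_of_add_eq' hk
  have := h.gram_nonpos hjk
  rw [e1, e2] at this
  simp [hpp, hi, mink_comm p, h.unit] at this
  linarith

end RASystem

/-! ### Combinatorics at an ideal vertex -/

/-- The normals vanishing at an ideal vertex `p` come in opposite pairs `a l true`, `a l false`,
indexed by `l ∈ R`. -/
structure Cusp {n : ℕ} {ι : Type*} (e : ι → Fin (n + 1) → ℝ) (p : Fin (n + 1) → ℝ)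
    (R : Finset ι) (a : ι → Bool → ι) (c : ι → ℝ) : Prop where
  le : ∀ i, mink (e i) p ≤ 0
  null : mink p p = 0
  future : 0 < p 0
  orth : ∀ l ∈ R, ∀ b, mink (e (a l b)) p = 0
  cross : ∀ l ∈ R, ∀ m ∈ R, l ≠ m → ∀ b b', mink (e (a l b)) (e (a m b')) = 0
  sum_eq : ∀ l ∈ R, ∀ b, e (a l b) + e (a l !b) = c l • p
  opp : ∀ l ∈ R, ∀ b, mink (e (a l b)) (e (a l !b)) = -1
  pos : ∀ l ∈ R, 0 < c l
  all : ∀ i, mink (e i) p = 0 → ∃ l ∈ R, ∃ b, i = a l b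

section Finset

variable {ι : Type*} [DecidableEq ι] {R : Finset ι}

lemma eq_erase_of_card_sdiff {D : Finset ι} (hD : D ⊆ R) (hc : (R \ D).card = 1) {l : ι}
    (hl : l ∈ R \ D) : D = R.erase l := by
  obtain ⟨m, hm⟩ := Finset.card_eq_one.1 hc
  rw [hm, Finset.mem_singleton] at hl
  rw [← Finset.sdiff_singleton_eq_erase, hl, ← hm, Finset.sdiff_sdiff_eq_self hD]

lemma card_sdiff_insert {D : Finset ι} {l : ι} (hl : l ∈ R \ D) {d : ℕ}
    (hc : (R \ D).card = d + 1) : (R \ insert l D).card = d := by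
  rw [Finset.sdiff_insert, Finset.card_erase_of_mem hl, hc]; rfl

end Finset

section Cusp

variable {n : ℕ} {ι : Type*} {e : ι → Fin (n + 1) → ℝ} {p : Fin (n + 1) → ℝ} {R : Finset ι}
  {a : ι → Bool → ι} {c : ι → ℝ}

namespace Cusp

lemma orth_p (C : Cusp e p R a c) {l : ι} (hl : l ∈ R) (b : Bool) :
    mink p (e (a l b)) = 0 := by rw [mink_comm, C.orth l hl b]

lemma neg (C : Cusp e p R a c) {i : ι} (hi : mink (e i) p ≠ 0) : mink (e i) p < 0 :=
  lt_of_le_of_ne (C.le i) hi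

lemma mink_add (C : Cusp e p R a c) {l : ι} (hl : l ∈ R) (b : Bool) (x : Fin (n + 1) → ℝ) :
    mink x (e (a l b)) + mink x (e (a l !b)) = c l * mink x p := by
  rw [← mink_add_right, C.sum_eq l hl, mink_smul_right]

lemma not_both (C : Cusp e p R a c) {i l : ι} (hi : mink (e i) p ≠ 0) (hl : l ∈ R) {b : Bool}
    (h1 : mink (e i) (e (a l b)) = 0) (h2 : mink (e i) (e (a l !b)) = 0) : False := by
  have := C.mink_add hl b (e i)
  rw [h1, h2, add_zero] at this
  exact mul_ne_zero (C.pos l hl).ne' hi this.symm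

end Cusp

end Cusp

section Cusp

variable {n : ℕ} {ι : Type*} [Fintype ι] [DecidableEq ι] {e : ι → Fin (n + 1) → ℝ}
  {y p : Fin (n + 1) → ℝ} {R : Finset ι} {a : ι → Bool → ι} {c : ι → ℝ}

open scoped Classical in
/-- Indices not vanishing at `p` orthogonal to the normals chosen by `σ` on `D`. -/
def cuspLink (e : ι → Fin (n + 1) → ℝ) (p : Fin (n + 1) → ℝ) (a : ι → Bool → ι)
    (D : Finset ι) (σ : ι → Bool) : Finset ι :=
  Finset.univ.filter fun i =>
    mink (e i) p ≠ 0 ∧ ∀ l ∈ D, mink (e i) (e (a l (σ l))) = 0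

lemma mem_cuspLink {D : Finset ι} {σ : ι → Bool} {i : ι} :
    i ∈ cuspLink e p a D σ ↔
      mink (e i) p ≠ 0 ∧ ∀ l ∈ D, mink (e i) (e (a l (σ l))) = 0 := by
  simp [cuspLink]

lemma cuspLink_congr {D : Finset ι} {σ τ : ι → Bool} (h : ∀ l ∈ D, σ l = τ l) :
    cuspLink e p a D σ = cuspLink e p a D τ := by
  ext i
  simp only [mem_cuspLink]
  refine and_congr_right fun _ => forall₂_congr fun l hl => by rw [h l hl]

lemma RASystem.exists_cusp (h : RASystem e y) (hp : ∀ i, mink (e i) p ≤ 0)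
    (hpp : mink p p = 0) (hp0 : 0 < p 0) :
    ∃ (R : Finset ι) (a : ι → Bool → ι) (c : ι → ℝ), Cusp e p R a c ∧ n ≤ R.card + 1 := by
  classical
  have hopp : ∀ i, ∃ j, ∃ d : ℝ, mink (e i) p = 0 →
      mink (e j) p = 0 ∧ mink (e i) (e j) = -1 ∧ 0 < d ∧ e i + e j = d • p := by
    intro i
    by_cases hi : mink (e i) p = 0
    · obtain ⟨j, h1, h2, d, h3, h4⟩ := h.exists_opposite hp hpp hp0 hi
      exact ⟨j, d, fun _ => ⟨h1, h2, h3, h4⟩⟩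
    · exact ⟨i, 0, fun h => absurd h hi⟩
  choose o c ho using hopp
  obtain ⟨R, hR, hmax⟩ := Finset.exists_max_image
    ((Finset.univ : Finset (Finset ι)).filter fun T => (∀ i ∈ T, mink (e i) p = 0) ∧
      ∀ i ∈ T, ∀ j ∈ T, i ≠ j → mink (e i) (e j) = 0) Finset.card ⟨∅, by simp⟩
  simp only [Finset.mem_filter, Finset.mem_univ, true_and] at hR hmax
  have hall : ∀ i, mink (e i) p = 0 → i ∈ R ∨ ∃ l ∈ R, i = o l := by
    intro i hi
    by_contra! hc
    have hor : ∀ l ∈ R, mink (e l) (e i) = 0 := by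
      intro l hl
      by_contra hne
      obtain ⟨h1, d, h2, h3⟩ := h.exists_smul_of_not_orth hpp hp0
        (by rintro rfl; exact hc.1 hl) (hR.1 l hl) hi hne
      exact hc.2 l hl (h.eq_of_opposite hpp (hR.1 l hl) h3 (ho l (hR.1 l hl)).2.2.2)
    have := hmax (insert i R) ⟨?_, ?_⟩
    · rw [Finset.card_insert_of_notMem hc.1] at this; omega
    · intro j hj
      rcases Finset.mem_insert.1 hj with rfl | hj
      exacts [hi, hR.1 j hj]
    · intro j hj k hk hjk
      rcases Finset.mem_insert.1 hj with h1 | h1 <;> rcases Finset.mem_insert.1 hk with h2 | h2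
      · exact absurd (h1.trans h2.symm) hjk
      · rw [h1, mink_comm]; exact hor k h2
      · rw [h2]; exact hor j h1
      · exact hR.2 j h1 k h2 hjk
  have hoe : ∀ l ∈ R, e (o l) = c l • p - e l := fun l hl =>
    eq_sub_of_add_eq' (ho l (hR.1 l hl)).2.2.2
  refine ⟨R, fun l b => bif b then l else o l, c, ⟨hp, hpp, hp0, ?_, ?_, ?_, ?_, ?_, ?_⟩, ?_⟩
  · rintro l hl (_ | _)
    exacts [(ho l (hR.1 l hl)).1, hR.1 l hl]
  · intro l hl m hm hlm
    have h0 := hR.2 l hl m hm hlm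
    have h1 := hR.1 l hl
    have h2 := hR.1 m hm
    rintro (_ | _) (_ | _) <;>
      simp [hoe l hl, hoe m hm, h0, hpp, h1, h2, mink_comm p]
  · rintro l hl (_ | _)
    · simpa [add_comm] using (ho l (hR.1 l hl)).2.2.2
    · simpa using (ho l (hR.1 l hl)).2.2.2
  · rintro l hl (_ | _)
    · simpa [mink_comm] using (ho l (hR.1 l hl)).2.1
    · simpa using (ho l (hR.1 l hl)).2.1
  · exact fun l hl => (ho l (hR.1 l hl)).2.2.1
  · intro i hi
    rcases hall i hi with h | ⟨l, hl, h⟩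
    · exact ⟨i, h, true, rfl⟩
    · exact ⟨l, hl, false, h⟩
  · let F : (Fin (n + 1) → ℝ) →ₗ[ℝ] (ℝ × ℝ) × (R → ℝ) :=
      ((LinearMap.proj 0).prod (minkLin p)).prod (LinearMap.pi fun l => minkLin (e l))
    have hF : Function.Injective F := by
      rw [← LinearMap.ker_eq_bot, LinearMap.ker_eq_bot']
      intro z hz
      have hz0 : z 0 = 0 := congrArg (fun w => w.1.1) hz
      have hpz : mink p z = 0 := congrArg (fun w => w.1.2) hz
      have hzR : ∀ l ∈ R, mink (e l) z = 0 := fun l hl => congrArg (fun w => w.2 ⟨l, hl⟩) hz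
      refine eq_zero_of_mink_self_nonpos hz0 (h.isolated hp hpp hpz fun i hi => ?_)
      rcases hall i hi with h | ⟨l, hl, rfl⟩
      · exact (hzR i h).le
      · rw [hoe l hl, mink_sub_left, mink_smul_left, hpz, hzR l hl]; simp
    have := LinearMap.finrank_le_finrank_of_injective hF
    simp at this
    omega

namespace Cusp

/-- Splitting a link along a pair of opposite normals. -/
lemma card_split (C : Cusp e p R a c) {D : Finset ι} {l : ι} (hl : l ∈ R) (hlD : l ∉ D)
    (σ : ι → Bool) (A : Finset ι) (hA : A ⊆ cuspLink e p a D σ)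
    (hAl : ∀ i ∈ A, ∀ b, mink (e i) (e (a l b)) ≠ 0) :
    (cuspLink e p a (insert l D) (Function.update σ l true)).card +
      (cuspLink e p a (insert l D) (Function.update σ l false)).card + A.card ≤
        (cuspLink e p a D σ).card := by
  have hmem : ∀ b i, i ∈ cuspLink e p a (insert l D) (Function.update σ l b) →
      i ∈ cuspLink e p a D σ ∧ mink (e i) (e (a l b)) = 0 := by
    intro b i hi
    rw [mem_cuspLink] at hi ⊢
    refine ⟨⟨hi.1, fun m hm => ?_⟩, by simpa using hi.2 l (Finset.mem_insert_self _ _)⟩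
    have := hi.2 m (Finset.mem_insert_of_mem hm)
    rwa [Function.update_of_ne (by rintro rfl; exact hlD hm)] at this
  rw [← Finset.card_union_of_disjoint, ← Finset.card_union_of_disjoint]
  · refine Finset.card_le_card (Finset.union_subset (Finset.union_subset ?_ ?_) hA)
    · exact fun i hi => (hmem _ i hi).1
    · exact fun i hi => (hmem _ i hi).1
  · rw [Finset.disjoint_left]
    intro i hi hiA
    rcases Finset.mem_union.1 hi with hi | hi
    · exact hAl i hiA _ (hmem _ i hi).2
    · exact hAl i hiA _ (hmem _ i hi).2
  · rw [Finset.disjoint_left]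
    intro i hi hi'
    exact C.not_both (mem_cuspLink.1 hi).1 hl (b := true) (hmem _ i hi).2 (hmem _ i hi').2

/-- At the far end of the edge from `p` determined by `σ` there is either a finite vertex, or
an ideal one, where each normal has an opposite. -/
lemma corner (C : Cusp e p R a c) (h : RASystem e y) (σ : ι → Bool) :
    (cuspLink e p a R σ).Nonempty ∨ ∀ l ∈ R, ∃ i ∈ cuspLink e p a (R.erase l) σ,
      mink (e i) (e (a l (σ l))) = -1 := by
  obtain ⟨x, hx1, hx2, hx3, hx4⟩ := h.exists_face_point (R.image fun l => a l (σ l)) (by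
    intro i hi j hj hij
    obtain ⟨l, hl, rfl⟩ := Finset.mem_image.1 hi
    obtain ⟨m, hm, rfl⟩ := Finset.mem_image.1 hj
    exact C.cross l hl m hm (by rintro rfl; exact hij rfl) _ _)
  have hxc : ∀ i, mink (e i) x ≤ 0 := fun i => by
    by_cases hi : i ∈ R.image fun l => a l (σ l)
    exacts [(hx1 i hi).le, (hx2 i hi).le]
  obtain ⟨t, ht, i, hi, hi0, hc⟩ := RASystem.exists_exit (z := -p) hxc
    (h.exists_pos_of_ne (Or.inl (by simpa using C.future)))
  have hip : mink (e i) p ≠ 0 := by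
    rw [mink_neg_right] at hi; linarith
  set q := x + t • -p with hq
  have hqR : ∀ l ∈ R, mink (e (a l (σ l))) q = 0 := by
    intro l hl
    rw [hq, mink_add_right, hx1 _ (Finset.mem_image_of_mem _ hl)]
    simp [C.orth l hl]
  have hqp : mink q p < 0 := by
    have := mink_neg_of_timelike hx3 hx4.le C.null.le C.future
    simpa [hq, C.null] using this
  obtain ⟨hq0, hqq⟩ := h.cone q hc
  rcases hqq.lt_or_eq with hlt | heq
  · left
    refine ⟨i, mem_cuspLink.2 ⟨hip, fun l hl => h.orth_of_timelike hlt ?_ hi0 (hqR l hl)⟩⟩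
    rintro rfl
    exact hip (C.orth l hl _)
  · right
    intro l hl
    have hq0' : 0 < q 0 := lt_of_le_of_ne hq0
      (time_ne_zero_of_causal hqq (by rintro h; rw [h] at hqp; simp at hqp)).symm
    obtain ⟨j, -, hj1, d, hd, hje⟩ := h.exists_opposite hc heq hq0' (hqR l hl)
    have hje' : e j = d • q - e (a l (σ l)) := eq_sub_of_add_eq' hje
    refine ⟨j, mem_cuspLink.2 ⟨?_, fun m hm => ?_⟩, by rw [mink_comm, hj1]⟩
    · rw [hje', mink_sub_left, mink_smul_left, C.orth l hl, sub_zero]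
      exact mul_ne_zero hd.ne' hqp.ne
    · have hm' := Finset.mem_of_mem_erase hm
      rw [hje', mink_sub_left, mink_smul_left, mink_comm q, hqR m hm',
        C.cross l hl m hm' (Finset.ne_of_mem_erase hm).symm]
      simp

lemma cuspLink_erase_nonempty (C : Cusp e p R a c) (h : RASystem e y) {l : ι} (hl : l ∈ R)
    (σ : ι → Bool) : (cuspLink e p a (R.erase l) σ).Nonempty := by
  rcases C.corner h σ with ⟨i, hi⟩ | h
  · rw [mem_cuspLink] at hi
    exact ⟨i, mem_cuspLink.2 ⟨hi.1, fun m hm => hi.2 m (Finset.mem_of_mem_erase hm)⟩⟩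
  · obtain ⟨i, hi, -⟩ := h l hl
    exact ⟨i, hi⟩

/-- Doubling: a lower bound for links of codimension `k` propagates. -/
lemma le_card_cuspLink_of_base (C : Cusp e p R a c) {k N : ℕ}
    (hb : ∀ D ⊆ R, (R \ D).card = k → ∀ σ, N ≤ (cuspLink e p a D σ).card) (d : ℕ) :
    ∀ D ⊆ R, (R \ D).card = d + k → ∀ σ, N * 2 ^ d ≤ (cuspLink e p a D σ).card := by
  induction d with
  | zero => intro D hD hc σ; simpa using hb D hD (by simpa using hc) σ
  | succ d ih =>
    intro D hD hc σ
    obtain ⟨l, hl⟩ : (R \ D).Nonempty := Finset.card_pos.1 (by omega)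
    have hl' := Finset.mem_sdiff.1 hl
    have hs := C.card_split hl'.1 hl'.2 σ ∅ (by simp) (by simp)
    have hi : insert l D ⊆ R := Finset.insert_subset hl'.1 hD
    have hci : (R \ insert l D).card = d + k := card_sdiff_insert hl (by omega)
    have h1 := ih _ hi hci (Function.update σ l true)
    have h2 := ih _ hi hci (Function.update σ l false)
    rw [pow_succ, ← mul_assoc]
    simp only [Finset.card_empty, add_zero] at hs
    omega

lemma two_pow_le_card_cuspLink (C : Cusp e p R a c) (h : RASystem e y) (d : ℕ) (D : Finset ι)
    (hD : D ⊆ R) (hc : (R \ D).card = d + 1) (σ : ι → Bool) :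
    2 ^ d ≤ (cuspLink e p a D σ).card := by
  have := C.le_card_cuspLink_of_base (k := 1) (N := 1) (fun D hD hc σ => by
    obtain ⟨l, hl⟩ : (R \ D).Nonempty := Finset.card_pos.1 (by omega)
    rw [eq_erase_of_card_sdiff hD hc hl]
    exact Finset.card_pos.2 (C.cuspLink_erase_nonempty h (Finset.mem_sdiff.1 hl).1 σ)) d D hD hc σ
  simpa using this

lemma card_edge_le_one (C : Cusp e p R a c) (h : RASystem e y) (d : ℕ) :
    ∀ D ⊆ R, (R \ D).card = d + 1 → ∀ σ, (cuspLink e p a D σ).card ≤ 2 ^ d →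
      ∀ l ∈ R \ D, ∀ τ, (∀ m ∈ D, σ m = τ m) → (cuspLink e p a (R.erase l) τ).card ≤ 1 := by
  induction d with
  | zero =>
    intro D hD hc σ hle l hl τ hτ
    rw [← eq_erase_of_card_sdiff hD hc hl, ← cuspLink_congr hτ]
    simpa using hle
  | succ d ih =>
    intro D hD hc σ hle l hl τ hτ
    obtain ⟨m, hm, hml⟩ := Finset.exists_mem_ne (by omega : 1 < (R \ D).card) l
    have hm' := Finset.mem_sdiff.1 hm
    have hs := C.card_split hm'.1 hm'.2 σ ∅ (by simp) (by simp)
    have hi : insert m D ⊆ R := Finset.insert_subset hm'.1 hD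
    have hci : (R \ insert m D).card = d + 1 := card_sdiff_insert hm (by omega)
    have h1 := C.two_pow_le_card_cuspLink h d _ hi hci (Function.update σ m true)
    have h2 := C.two_pow_le_card_cuspLink h d _ hi hci (Function.update σ m false)
    simp only [Finset.card_empty, add_zero] at hs
    rw [pow_succ] at hle
    refine ih _ hi hci (Function.update σ m (τ m)) ?_ l ?_ τ ?_
    · cases τ m <;> omega
    · have := Finset.mem_sdiff.1 hl
      simp [this.1, this.2, hml.symm]
    · intro k hk
      by_cases hkm : k = m
      · subst hkm; simp
      · rw [Function.update_of_ne hkm]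
        exact hτ k ((Finset.mem_insert.1 hk).resolve_left hkm)

/-- In a link of minimal possible size every normal is orthogonal to one member of each opposite
pair and has product `-1` with the other. -/
lemma exists_orth_of_card_le (C : Cusp e p R a c) (h : RASystem e y) {d : ℕ} {D : Finset ι}
    (hD : D ⊆ R) (hc : (R \ D).card = d + 2) {σ : ι → Bool}
    (hle : (cuspLink e p a D σ).card ≤ 2 ^ (d + 1)) {i : ι} (hi : i ∈ cuspLink e p a D σ)
    {l : ι} (hl : l ∈ R \ D) :
    ∃ b, mink (e i) (e (a l b)) = 0 ∧ mink (e i) (e (a l !b)) = -1 := by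
  have hex : ∀ l ∈ R \ D, ∃ b, mink (e i) (e (a l b)) = 0 := by
    intro l hl
    by_contra! hne
    have hl' := Finset.mem_sdiff.1 hl
    have hs := C.card_split hl'.1 hl'.2 σ {i} (by simpa using hi) (by simpa using hne)
    have hin : insert l D ⊆ R := Finset.insert_subset hl'.1 hD
    have hci : (R \ insert l D).card = d + 1 := card_sdiff_insert hl (by omega)
    have h1 := C.two_pow_le_card_cuspLink h d _ hin hci (Function.update σ l true)
    have h2 := C.two_pow_le_card_cuspLink h d _ hin hci (Function.update σ l false)
    rw [pow_succ] at hle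
    simp only [Finset.card_singleton] at hs
    omega
  have hiD := mem_cuspLink.1 hi
  have hsig : ∀ m, ∃ b, (m ∈ D → b = σ m) ∧ (m ∈ R → mink (e i) (e (a m b)) = 0) := by
    intro m
    by_cases hmD : m ∈ D
    · exact ⟨σ m, fun _ => rfl, fun _ => hiD.2 m hmD⟩
    · by_cases hmR : m ∈ R
      · obtain ⟨b, hb⟩ := hex m (Finset.mem_sdiff.2 ⟨hmR, hmD⟩)
        exact ⟨b, fun h => absurd h hmD, fun _ => hb⟩
      · exact ⟨true, fun h => absurd h hmD, fun h => absurd h hmR⟩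
  choose τ hτD hτR using hsig
  have hlR := (Finset.mem_sdiff.1 hl).1
  refine ⟨τ l, hτR l hlR, ?_⟩
  set τ' := Function.update τ l (!τ l) with hτ'
  have hτe : cuspLink e p a (R.erase l) τ' = cuspLink e p a (R.erase l) τ :=
    cuspLink_congr fun m hm => by rw [hτ', Function.update_of_ne (Finset.ne_of_mem_erase hm)]
  have hi' : i ∈ cuspLink e p a (R.erase l) τ' := by
    rw [hτe, mem_cuspLink]
    exact ⟨hiD.1, fun m hm => hτR m (Finset.mem_of_mem_erase hm)⟩
  have hone : ∀ j ∈ cuspLink e p a (R.erase l) τ', j = i := by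
    have := C.card_edge_le_one h (d + 1) D hD hc σ hle l hl τ fun m hm => (hτD m hm).symm
    rw [← hτe] at this
    exact fun j hj => Finset.card_le_one.1 this j hj i hi'
  rcases C.corner h τ' with ⟨j, hj⟩ | hcor
  · exfalso
    have hj' := mem_cuspLink.1 hj
    have : j = i := hone j (mem_cuspLink.2 ⟨hj'.1, fun m hm =>
      hj'.2 m (Finset.mem_of_mem_erase hm)⟩)
    subst this
    have h2 := hj'.2 l hlR
    rw [hτ', Function.update_self] at h2
    exact C.not_both hiD.1 hlR (hτR l hlR) h2
  · obtain ⟨j, hj, hj1⟩ := hcor l hlR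
    rw [hone j hj, hτ', Function.update_self] at hj1
    exact hj1

end Cusp

end Cusp

section Cusp

variable {n : ℕ} {ι : Type*} [Fintype ι] [DecidableEq ι] {e : ι → Fin (n + 1) → ℝ}
  {y p : Fin (n + 1) → ℝ} {R : Finset ι} {a : ι → Bool → ι} {c : ι → ℝ}

namespace Cusp

set_option maxHeartbeats 1000000 in
/-- A link of codimension five cannot have the minimal size `16`: otherwise the polyhedron would
have a non-isolated point at infinity. -/
lemma seventeen_le_card_cuspLink (C : Cusp e p R a c) (h : RASystem e y) (D : Finset ι)
    (hD : D ⊆ R) (hc : (R \ D).card = 5) (σ : ι → Bool) :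
    17 ≤ (cuspLink e p a D σ).card := by
  by_contra! hlt
  set L := R \ D with hL
  have hLR : ∀ l ∈ L, l ∈ R := fun l hl => (Finset.mem_sdiff.1 hl).1
  have hex : ∀ i ∈ cuspLink e p a D σ, ∀ l ∈ L,
      ∃ b, mink (e i) (e (a l b)) = 0 ∧ mink (e i) (e (a l !b)) = -1 := fun i hi l hl =>
    C.exists_orth_of_card_le h (d := 3) hD hc (by omega) hi hl
  have hcp : ∀ i ∈ cuspLink e p a D σ, ∀ l ∈ L, c l * mink (e i) p = -1 := by
    intro i hi l hl
    obtain ⟨b, h1, h2⟩ := hex i hi l hl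
    rw [← C.mink_add (hLR l hl) b, h1, h2, zero_add]
  obtain ⟨i₀, hi₀⟩ : (cuspLink e p a D σ).Nonempty := Finset.card_pos.1
    ((Nat.two_pow_pos 4).trans_le (C.two_pow_le_card_cuspLink h 4 D hD hc σ))
  have hi₀' := mem_cuspLink.1 hi₀
  obtain ⟨l₁, hl₁, l₂, hl₂, hl12⟩ := Finset.one_lt_card.1 (by omega : 1 < L.card)
  have hτ : ∀ l, ∃ b, l ∈ L →
      mink (e i₀) (e (a l b)) = 0 ∧ mink (e i₀) (e (a l !b)) = -1 := by
    intro l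
    by_cases hl : l ∈ L
    · obtain ⟨b, hb⟩ := hex i₀ hi₀ l hl
      exact ⟨b, fun _ => hb⟩
    · exact ⟨true, fun h => absurd h hl⟩
  choose τ hτ using hτ
  have hcl : ∀ l ∈ L, c l = c l₁ := fun l hl =>
    mul_right_cancel₀ hi₀'.1 ((hcp i₀ hi₀ l hl).trans (hcp i₀ hi₀ l₁ hl₁).symm)
  set q := c l₁ • p with hq
  set u : ι → Fin (n + 1) → ℝ := fun l => e (a l (τ l)) with hu
  have huq : ∀ l ∈ L, e (a l !τ l) = q - u l := fun l hl => by
    rw [hq, ← hcl l hl, ← C.sum_eq l (hLR l hl) (τ l)]; simp [hu]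
  have hqq : mink q q = 0 := by simp [hq, C.null]
  have hqH : ∀ i ∈ cuspLink e p a D σ, mink (e i) q = -1 := fun i hi => by
    rw [hq, mink_smul_right, hcp i hi l₁ hl₁]
  have hqR : ∀ l ∈ R, ∀ b, mink (e (a l b)) q = 0 := fun l hl b => by
    rw [hq, mink_smul_right, C.orth l hl, mul_zero]
  have huu : ∀ l ∈ L, ∀ m ∈ L, mink (u l) (u m) = if l = m then 1 else 0 := by
    intro l hl m hm
    split_ifs with hlm
    · rw [hlm]; exact h.unit _
    · exact C.cross l (hLR l hl) m (hLR m hm) hlm _ _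
  have hufD : ∀ m ∈ D, ∀ b, ∀ l ∈ L, mink (e (a m b)) (u l) = 0 := fun m hm b l hl =>
    C.cross m (hD hm) l (hLR l hl)
      (by rintro rfl; exact (Finset.mem_sdiff.1 hl).2 hm) _ _
  set U := ∑ l ∈ L, u l with hU
  have hUu : ∀ l ∈ L, mink (u l) U = 1 := by
    intro l hl
    rw [hU, mink_sum_right, Finset.sum_congr rfl fun m hm => huu l hl m hm]
    simp [hl]
  have hUU : mink U U = 5 := by
    conv_lhs => rw [hU]
    rw [← hU, mink_sum_left, Finset.sum_congr rfl hUu]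
    simp [hc]
  have hEU : mink (e i₀) U = 0 := by
    rw [hU, mink_sum_right]
    exact Finset.sum_eq_zero fun l hl => (hτ l hl).1
  have hqU : mink q U = 0 := by
    rw [hU, mink_sum_right]
    exact Finset.sum_eq_zero fun l hl => by rw [mink_comm]; exact hqR l (hLR l hl) _
  set w := e i₀ + (9 / 8 : ℝ) • q - (1 / 2 : ℝ) • U with hw
  have hww : mink w w = 0 := by
    rw [hw]
    simp [h.unit, hqH i₀ hi₀, mink_comm q (e i₀), hqq, hEU, mink_comm U (e i₀), hqU,
      mink_comm U q, hUU]
    norm_num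
  have hwp : mink w p < 0 := by
    have hpU : mink U p = 0 := by
      rw [hU, mink_sum_left]
      exact Finset.sum_eq_zero fun l hl => C.orth l (hLR l hl) _
    simpa [hw, hq, C.null, hpU] using C.neg hi₀'.1
  have hw0 : 0 < w 0 := time_pos_of_mink_neg hww.le C.null.le C.future.le hwp
  have hwu : ∀ l ∈ L, mink (u l) w = -(1 / 2) := by
    intro l hl
    have h1 : mink (u l) (e i₀) = 0 := by rw [mink_comm]; exact (hτ l hl).1
    have h2 : mink (u l) q = 0 := hqR l (hLR l hl) _
    simp [hw, h1, h2, hUu l hl]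
  have hwq : mink q w = -1 := by
    simp [hw, mink_comm q (e i₀), hqH i₀ hi₀, hqq, hqU]
  have hwD : ∀ m ∈ D, mink (e (a m (σ m))) w = 0 := by
    intro m hm
    have h1 : mink (e (a m (σ m))) (e i₀) = 0 := by rw [mink_comm]; exact hi₀'.2 m hm
    have h2 : mink (e (a m (σ m))) U = 0 := by
      rw [hU, mink_sum_right]
      exact Finset.sum_eq_zero fun l hl => hufD m hm _ l hl
    simp [hw, h1, h2, hqR m (hD hm)]
  set z := u l₁ - u l₂ with hz
  have hwz : mink w z = 0 := by
    rw [hz, mink_sub_right, mink_comm w, mink_comm w, hwu l₁ hl₁, hwu l₂ hl₂, sub_self]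
  have hzD : ∀ m ∈ D, ∀ b, mink (e (a m b)) z = 0 := by
    intro m hm b
    rw [hz, mink_sub_right, hufD m hm b l₁ hl₁, hufD m hm b l₂ hl₂, sub_self]
  have hzz : mink z z = 2 := by
    simp only [hz, mink_sub_left, mink_sub_right, huu _ hl₁ _ hl₁, huu _ hl₁ _ hl₂,
      huu _ hl₂ _ hl₁, huu _ hl₂ _ hl₂, hl12, hl12.symm, if_true, if_false]
    norm_num
  have key : ∀ j, mink (e j) w < 0 ∨ mink (e j) w ≤ 0 ∧ (mink (e j) w = 0 → mink (e j) z = 0) := by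
    intro j
    by_cases hjp : mink (e j) p = 0
    · obtain ⟨l, hl, b, rfl⟩ := C.all j hjp
      by_cases hlD : l ∈ D
      · by_cases hb : b = σ l
        · subst hb
          exact Or.inr ⟨(hwD l hlD).le, fun _ => hzD l hlD _⟩
        · left
          have hb' : b = !σ l := Bool.eq_not.2 hb
          have := C.mink_add hl (σ l) w
          rw [mink_comm w, hwD l hlD, zero_add, mink_comm w] at this
          rw [hb', this]
          exact mul_neg_of_pos_of_neg (C.pos l hl) hwp
      · left
        have hlL : l ∈ L := Finset.mem_sdiff.2 ⟨hl, hlD⟩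
        by_cases hb : b = τ l
        · subst hb
          have := hwu l hlL
          simp only [hu] at this
          rw [this]; norm_num
        · have hb' : b = !τ l := Bool.eq_not.2 hb
          rw [hb', huq l hlL, mink_sub_left, hwq, hwu l hlL]; norm_num
    · by_cases hjH : j ∈ cuspLink e p a D σ
      · left
        set β : ι → ℝ := fun l => mink (e j) (u l) with hβ
        have hβ2 : ∀ l ∈ L, β l * β l = -β l := by
          intro l hl
          obtain ⟨b, h1, h2⟩ := hex j hjH l hl
          by_cases hb : b = τ l
          · subst hb; simp [hβ, hu, h1]
          · have hb' : τ l = !b := Bool.eq_not.2 (Ne.symm hb)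
            simp [hβ, hu, hb', h2]
        set B := ∑ l ∈ L, β l • u l with hB
        have hβu : ∀ l ∈ L, mink (u l) B = β l := by
          intro l hl
          rw [hB, mink_sum_right]
          simp only [mink_smul_right]
          rw [Finset.sum_congr rfl fun m hm => by rw [huu l hl m hm]]
          simp [hl]
        have hBB : mink B B = -∑ l ∈ L, β l := by
          conv_lhs => rw [hB]
          rw [← hB, mink_sum_left, ← Finset.sum_neg_distrib]
          refine Finset.sum_congr rfl fun l hl => ?_
          rw [mink_smul_left, hβu l hl, hβ2 l hl]
        have hjB : mink (e j) B = -∑ l ∈ L, β l := by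
          rw [hB, mink_sum_right, ← Finset.sum_neg_distrib]
          refine Finset.sum_congr rfl fun l hl => ?_
          rw [mink_smul_right, ← hβ2 l hl]
        have hEB : mink (e i₀) B = 0 := by
          rw [hB, mink_sum_right]
          exact Finset.sum_eq_zero fun l hl => by
            rw [mink_smul_right, show mink (e i₀) (u l) = 0 from (hτ l hl).1, mul_zero]
        have hpB : mink p B = 0 := by
          rw [hB, mink_sum_right]
          exact Finset.sum_eq_zero fun l hl => by
            rw [mink_smul_right, show mink p (u l) = 0 from C.orth_p (hLR l hl) _, mul_zero]
        have hpe : mink p (e j) = mink p (e i₀) := by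
          rw [mink_comm p, mink_comm p]
          exact mul_left_cancel₀ (C.pos l₁ (hLR l₁ hl₁)).ne'
            ((hcp j hjH l₁ hl₁).trans (hcp i₀ hi₀ l₁ hl₁).symm)
        have hv := mink_self_nonneg_of_orth C.null.le C.future.ne' (y := e j - e i₀ - B)
          (by simp [hpe, hpB])
        simp [h.unit, mink_comm (e i₀) (e j), mink_comm B, hjB, hEB, hBB] at hv
        have hjU : mink (e j) U = ∑ l ∈ L, β l := by rw [hU, mink_sum_right]
        simp [hw, hqH j hjH, hjU]
        linarith
      · right
        have : ∃ m ∈ D, mink (e j) (e (a m (σ m))) ≠ 0 := by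
          by_contra! hcon
          exact hjH (mem_cuspLink.2 ⟨hjp, hcon⟩)
        obtain ⟨m, hm, hne⟩ := this
        set f := e (a m (σ m)) with hf
        have hjm : j ≠ a m (σ m) := by
          rintro rfl
          exact hjp (C.orth m (hD hm) _)
        have hβ := (h.gram _ _ hjm).resolve_left hne
        rw [← hf] at hβ
        set β := mink (e j) f with hβd
        have hff : mink f f = 1 := h.unit _
        have hnn : mink (e j - β • f) (e j - β • f) ≤ 0 := by
          simp [h.unit, hff, mink_comm f (e j), ← hβd]
          nlinarith
        have hfp : mink f p = 0 := C.orth m (hD hm) _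
        have hfut : 0 < (e j - β • f) 0 := by
          refine time_pos_of_mink_neg hnn C.null.le C.future.le ?_
          rw [mink_sub_left, mink_smul_left, hfp, mul_zero, sub_zero]
          exact C.neg hjp
        have hjw : mink (e j) w = mink (e j - β • f) w := by
          rw [mink_sub_left, mink_smul_left, hwD m hm, mul_zero, sub_zero]
        refine ⟨by rw [hjw]; exact mink_nonpos_of_causal hnn hfut.le hww.le hw0.le, fun h0 => ?_⟩
        obtain ⟨s, hs⟩ := exists_eq_smul_of_orth hww.le hw0.ne' (y := e j - β • f)
          (by rw [mink_comm, ← hjw, h0]) hnn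
        have hjz : mink (e j - β • f) z = mink (e j) z := by
          rw [mink_sub_left, mink_smul_left, hzD m hm, mul_zero, sub_zero]
        rw [← hjz, hs, mink_smul_left, hwz, mul_zero]
  have := h.isolated (p := w) (z := z) (fun j => (key j).elim le_of_lt And.left) hww hwz
    fun j hj => ((key j).resolve_left (by rw [hj]; exact lt_irrefl 0)).2 hj |>.le
  linarith

lemma card_ge (C : Cusp e p R a c) (h : RASystem e y) (d : ℕ) (hR : R.card = d + 5) :
    2 * (d + 5) + 17 * 2 ^ d ≤ Fintype.card ι := by
  have h1 := C.le_card_cuspLink_of_base (k := 5) (N := 17)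
    (fun D hD hc σ => C.seventeen_le_card_cuspLink h D hD hc σ) d ∅ (by simp)
    (by simpa using hR) fun _ => true
  have hinj : Set.InjOn (fun x : ι × Bool => a x.1 x.2) (R ×ˢ (Finset.univ : Finset Bool)) := by
    rintro ⟨l, b⟩ hl ⟨m, b'⟩ hm heq
    simp only [Finset.coe_univ, Set.mem_prod, Finset.mem_coe, Set.mem_univ, and_true] at hl hm heq
    by_cases hlm : l = m
    · subst hlm
      by_cases hb : b = b'
      · rw [hb]
      · exfalso
        have hb' : b' = !b := Bool.eq_not.2 (Ne.symm hb)
        have h2 := C.opp l hl b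
        rw [← hb', ← heq, h.unit] at h2
        norm_num at h2
    · exfalso
      have h2 := C.cross l hl m hm hlm b b'
      rw [← heq, h.unit] at h2
      norm_num at h2
  have hdis : Disjoint ((R ×ˢ (Finset.univ : Finset Bool)).image fun x => a x.1 x.2)
      (cuspLink e p a ∅ fun _ => true) := by
    rw [Finset.disjoint_left]
    intro i hi hi'
    obtain ⟨⟨l, b⟩, hl, rfl⟩ := Finset.mem_image.1 hi
    exact (mem_cuspLink.1 hi').1 (C.orth l (Finset.mem_product.1 hl).1 b)
  have h2 := Finset.card_le_univ (((R ×ˢ (Finset.univ : Finset Bool)).image fun x => a x.1 x.2) ∪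
    cuspLink e p a ∅ fun _ => true)
  rw [Finset.card_union_of_disjoint hdis, Finset.card_image_of_injOn (by exact_mod_cast hinj),
    Finset.card_product, hR] at h2
  simp at h2
  omega

end Cusp

/-- A right-angled system with an ideal vertex has many normals. -/
lemma RASystem.card_ge_of_ideal (h : RASystem e y) (hp : ∀ i, mink (e i) p ≤ 0)
    (hpp : mink p p = 0) (hp0 : p ≠ 0) {d : ℕ} (hn : n = d + 6) :
    2 * (d + 5) + 17 * 2 ^ d ≤ Fintype.card ι := by
  obtain ⟨R, a, c, C, hR⟩ := h.exists_cusp hp hpp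
    (lt_of_le_of_ne (h.cone p hp).1 (time_ne_zero_of_causal hpp.le hp0).symm)
  have := C.card_ge h (R.card - 5) (by omega)
  have h2 : 2 ^ d ≤ 2 ^ (R.card - 5) := Nat.pow_le_pow_right (by norm_num) (by omega)
  omega

end Cusp

/-! ### Compact case: a counting lemma for graphs without induced squares -/

section Graph

variable {ι : Type*} [DecidableEq ι] {G : SimpleGraph ι} [DecidableRel G.Adj]

/-- Cliques in `U` have at most `d` vertices, and those with fewer than `d` vertices have at least
two common neighbours in `U`. -/
def CliqueSphere (G : SimpleGraph ι) (d : ℕ) (U : Finset ι) : Prop :=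
  ∀ T ⊆ U, (∀ i ∈ T, ∀ j ∈ T, i ≠ j → G.Adj i j) →
    T.card ≤ d ∧ (T.card < d → ∃ i ∈ U, ∃ j ∈ U, i ≠ j ∧ ∀ t ∈ T, G.Adj t i ∧ G.Adj t j)

/-- `G` has no induced cycle of length four. -/
def NoSquare (G : SimpleGraph ι) : Prop :=
  ∀ a a' b b', a ≠ a' → b ≠ b' → ¬ G.Adj a a' → ¬ G.Adj b b' →
    G.Adj a b → G.Adj a b' → G.Adj a' b → G.Adj a' b' → False

/-- Every clique sphere of dimension `d` has at least `N` vertices, each of which has at least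
`M` non-neighbours. -/
def SizeBound (G : SimpleGraph ι) [DecidableRel G.Adj] (d N M : ℕ) : Prop :=
  ∀ U : Finset ι, CliqueSphere G d U →
    N ≤ U.card ∧ ∀ u ∈ U, M ≤ (U.filter fun x => x ≠ u ∧ ¬ G.Adj u x).card

lemma CliqueSphere.link {d : ℕ} {U : Finset ι} (h : CliqueSphere G (d + 1) U) {u : ι}
    (hu : u ∈ U) : CliqueSphere G d (U.filter fun x => G.Adj u x) := by
  intro T hT hc
  have hTu : ∀ t ∈ T, G.Adj u t := fun t ht => (Finset.mem_filter.1 (hT ht)).2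
  have huT : u ∉ T := fun hu => G.irrefl (hTu u hu)
  obtain ⟨h1, h2⟩ := h (insert u T)
    (Finset.insert_subset hu (hT.trans (Finset.filter_subset _ _))) (by
      intro i hi j hj hij
      rcases Finset.mem_insert.1 hi with h1 | h1 <;> rcases Finset.mem_insert.1 hj with h2 | h2
      · exact absurd (h1.trans h2.symm) hij
      · rw [h1]; exact hTu j h2
      · rw [h2]; exact (hTu i h1).symm
      · exact hc i h1 j h2 hij)
  rw [Finset.card_insert_of_notMem huT] at h1 h2
  refine ⟨by omega, fun hlt => ?_⟩
  obtain ⟨i, hi, j, hj, hij, hT'⟩ := h2 (by omega)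
  have hu' := hT' u (Finset.mem_insert_self _ _)
  exact ⟨i, Finset.mem_filter.2 ⟨hi, hu'.1⟩, j, Finset.mem_filter.2 ⟨hj, hu'.2⟩, hij,
    fun t ht => hT' t (Finset.mem_insert_of_mem ht)⟩

lemma sizeBound_one : SizeBound G 1 2 1 := by
  intro U hU
  obtain ⟨i, hi, j, hj, hij, -⟩ := (hU ∅ (by simp) (by simp)).2 (by simp)
  refine ⟨Finset.one_lt_card.2 ⟨i, hi, j, hj, hij⟩, fun u hu => Finset.card_pos.2 ?_⟩
  obtain ⟨x, hx, hxu⟩ := Finset.exists_mem_ne (Finset.one_lt_card.2 ⟨i, hi, j, hj, hij⟩) u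
  refine ⟨x, Finset.mem_filter.2 ⟨hx, hxu, fun hadj => ?_⟩⟩
  have := (hU {u, x} (by simp [Finset.insert_subset_iff, hu, hx]) (by
    simp only [Finset.mem_insert, Finset.mem_singleton]
    rintro a (rfl | rfl) b (rfl | rfl) hab
    exacts [absurd rfl hab, hadj, hadj.symm, absurd rfl hab])).1
  rw [Finset.card_pair hxu.symm] at this
  omega

lemma SizeBound.succ (hG : NoSquare G) {d N M : ℕ} (h : SizeBound G d N M) (M' : ℕ)
    (hM : ∀ k, N * M ≤ k * d → M' ≤ k) : SizeBound G (d + 1) (1 + N + M') M' := by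
  intro U hU
  have hnon : ∀ u ∈ U, M' ≤ (U.filter fun x => x ≠ u ∧ ¬ G.Adj u x).card := by
    intro u hu
    refine hM _ ((Nat.mul_le_mul_right M (h _ (hU.link hu)).1).trans
      (Finset.card_mul_le_card_mul G.Adj ?_ ?_))
    · intro w hw
      have hw' := Finset.mem_filter.1 hw
      refine ((h _ (hU.link hw'.1)).2 u (Finset.mem_filter.2 ⟨hu, hw'.2.symm⟩)).trans
        (Finset.card_le_card fun x hx => ?_)
      simp only [Finset.mem_filter, Finset.mem_bipartiteAbove] at hx ⊢
      exact ⟨⟨hx.1.1, hx.2⟩, hx.1.2⟩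
    · intro x hx
      have hx' := Finset.mem_filter.1 hx
      refine (hU.link hu _ (Finset.filter_subset _ _) ?_).1
      intro i hi j hj hij
      simp only [Finset.mem_filter] at hi hj
      by_contra hadj
      exact hG u x i j hx'.2.1.symm hij hx'.2.2 hadj hi.1.2 hj.1.2 hi.2.symm hj.2.symm
  refine ⟨?_, hnon⟩
  obtain ⟨u, hu, -⟩ := (hU ∅ (by simp) (by simp)).2 (by simp)
  have h1 := (h _ (hU.link hu)).1
  have h2 := hnon u hu
  have hd : Disjoint (U.filter fun x => G.Adj u x) (U.filter fun x => x ≠ u ∧ ¬ G.Adj u x) := by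
    rw [Finset.disjoint_left]
    intro x hx hx'
    exact (Finset.mem_filter.1 hx').2.2 (Finset.mem_filter.1 hx).2
  have h3 : ((U.filter fun x => G.Adj u x) ∪ (U.filter fun x => x ≠ u ∧ ¬ G.Adj u x)).card ≤
      (U.erase u).card := by
    refine Finset.card_le_card fun x hx => ?_
    simp only [Finset.mem_union, Finset.mem_filter] at hx
    rcases hx with ⟨hx, hadj⟩ | ⟨hx, hne, -⟩
    · exact Finset.mem_erase.2 ⟨by rintro rfl; exact G.irrefl hadj, hx⟩
    · exact Finset.mem_erase.2 ⟨hne, hx⟩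
  rw [Finset.card_union_of_disjoint hd, Finset.card_erase_of_mem hu] at h3
  have := Finset.card_pos.2 ⟨u, hu⟩
  omega

lemma exists_sizeBound (hG : NoSquare G) (d : ℕ) : ∃ N M, 5509 ≤ N ∧ SizeBound G (d + 6) N M := by
  induction d with
  | zero =>
    have h2 := (sizeBound_one (G := G)).succ hG 2 (by omega)
    have h3 := h2.succ hG 5 (by omega)
    have h4 := h3.succ hG 19 (by omega)
    have h5 := h4.succ hG 148 (by omega)
    have h6 := h5.succ hG 5328 (by omega)
    exact ⟨_, _, by norm_num, h6⟩
  | succ d ih =>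
    obtain ⟨N, M, hN, h⟩ := ih
    exact ⟨_, _, by omega, h.succ hG 0 (by omega)⟩

end Graph

namespace RASystem

variable {n : ℕ} {ι : Type*} {e : ι → Fin (n + 1) → ℝ} {y : Fin (n + 1) → ℝ}

/-- Two normals are adjacent if they are orthogonal. -/
def orthGraph (e : ι → Fin (n + 1) → ℝ) : SimpleGraph ι where
  Adj i j := i ≠ j ∧ mink (e i) (e j) = 0
  symm := ⟨fun _ _ h => ⟨h.1.symm, by rw [mink_comm]; exact h.2⟩⟩
  loopless := ⟨fun _ h => h.1 rfl⟩

lemma add_mem_cone (h : RASystem e y) {i j : ι} (hij : mink (e i) (e j) ≤ -1) (k : ι) :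
    mink (e k) (e i + e j) ≤ 0 := by
  rw [mink_add_right]
  by_cases hi : k = i
  · subst hi; rw [h.unit]; linarith
  by_cases hj : k = j
  · subst hj; rw [h.unit, mink_comm]; linarith
  linarith [h.gram_nonpos hi, h.gram_nonpos hj]

lemma noSquare (h : RASystem e y)
    (hnull : ∀ p, (∀ i, mink (e i) p ≤ 0) → mink p p = 0 → p = 0) : NoSquare (orthGraph e) := by
  intro a a' b b' ha hb haa hbb h1 h2 h3 h4
  have ha' := (h.gram a a' ha).resolve_left fun h0 => haa ⟨ha, h0⟩
  have hb' := (h.gram b b' hb).resolve_left fun h0 => hbb ⟨hb, h0⟩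
  have hs := (h.cone _ (h.add_mem_cone ha')).2
  have hr := (h.cone _ (h.add_mem_cone hb')).2
  have hsr : mink (e a + e a') (e b + e b') = 0 := by
    simp [h1.2, h2.2, h3.2, h4.2]
  rcases hs.lt_or_eq with hlt | heq
  · exact h.add_ne_zero b b' (eq_zero_of_orth_timelike hlt hsr hr)
  · exact h.add_ne_zero a a' (hnull _ (h.add_mem_cone ha') heq)

lemma cliqueSphere [Fintype ι] (h : RASystem e y)
    (hnull : ∀ p, (∀ i, mink (e i) p ≤ 0) → mink p p = 0 → p = 0) :
    CliqueSphere (orthGraph e) n Finset.univ := by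
  classical
  intro T _ hT
  obtain ⟨x, hx1, hx2, hx3, hx4⟩ := h.exists_face_point T fun i hi j hj hij => (hT i hi j hj hij).2
  have hxc : ∀ i, mink (e i) x ≤ 0 := fun i => by
    by_cases hi : i ∈ T
    exacts [(hx1 i hi).le, (hx2 i hi).le]
  let F : (Fin (n + 1) → ℝ) →ₗ[ℝ] ℝ × (T → ℝ) :=
    (minkLin x).prod (LinearMap.pi fun t => minkLin (e t))
  constructor
  · have hF : Function.Surjective F := by
      rintro ⟨α, β⟩
      refine ⟨(α / mink x x) • x + ∑ t : T, β t • e t, Prod.ext ?_ ?_⟩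
      · change mink x _ = α
        rw [mink_add_right, mink_smul_right, div_mul_cancel₀ _ hx3.ne, mink_sum_right,
          Finset.sum_eq_zero, add_zero]
        intro t _
        rw [mink_smul_right, mink_comm, hx1 t t.2, mul_zero]
      · funext s
        change mink (e s) _ = β s
        rw [mink_add_right, mink_smul_right, hx1 s s.2, mul_zero, zero_add, mink_sum_right,
          Finset.sum_eq_single s]
        · rw [mink_smul_right, h.unit, mul_one]
        · intro t _ hts
          rw [mink_smul_right, (hT s s.2 t t.2 fun h => hts (Subtype.ext h.symm)).2, mul_zero]
        · simp
    have := LinearMap.finrank_le_finrank_of_surjective hF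
    simp at this
    omega
  · intro hlt
    have hker : LinearMap.ker F ≠ ⊥ := LinearMap.ker_ne_bot_of_finrank_lt (by simp; omega)
    obtain ⟨z, hz, hz0⟩ := Submodule.exists_mem_ne_zero_of_ne_bot hker
    have hxz : mink x z = 0 := congrArg (fun w => w.1) hz
    have hTz : ∀ t ∈ T, mink (e t) z = 0 := fun t ht => congrArg (fun w => w.2 ⟨t, ht⟩) hz
    have key : ∀ z : Fin (n + 1) → ℝ, z ≠ 0 → mink x z = 0 → (∀ t ∈ T, mink (e t) z = 0) →
        ∃ i, 0 < mink (e i) z ∧ ∀ t ∈ T, (orthGraph e).Adj t i := by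
      intro z hz0 hxz hTz
      obtain ⟨t, -, i, hi, hi0, hc⟩ := exists_exit (z := z) hxc (h.exists_pos_of_ne (Or.inr (by
        by_contra! hneg
        exact hz0 (eq_zero_of_orth_timelike hx3 hxz hneg))))
      refine ⟨i, hi, fun s hs => ?_⟩
      have hsi : s ≠ i := by
        rintro rfl
        rw [hTz s hs] at hi
        exact lt_irrefl _ hi
      refine ⟨hsi, h.orth_of_timelike (x := x + t • z) ?_ hsi ?_ hi0⟩
      · refine lt_of_le_of_ne (h.cone _ hc).2 fun h0 => ?_
        have h2 : mink x (x + t • z) = 0 := by rw [hnull _ hc h0, mink_zero_right]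
        rw [mink_add_right, mink_smul_right, hxz, mul_zero, add_zero] at h2
        exact hx3.ne h2
      · rw [mink_add_right, mink_smul_right, hx1 s hs, hTz s hs, mul_zero, add_zero]
    obtain ⟨i, hi, hiT⟩ := key z hz0 hxz hTz
    obtain ⟨j, hj, hjT⟩ := key (-z) (neg_ne_zero.2 hz0) (by rw [mink_neg_right, hxz, neg_zero])
      fun t ht => by rw [mink_neg_right, hTz t ht, neg_zero]
    refine ⟨i, Finset.mem_univ _, j, Finset.mem_univ _, ?_, fun t ht => ⟨hiT t ht, hjT t ht⟩⟩
    rintro rfl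
    rw [mink_neg_right] at hj
    linarith

/-- A lower bound for the number of normals of a right-angled system. -/
theorem card_ge [Fintype ι] (h : RASystem e y) {d : ℕ} (hn : n = d + 6) :
    5509 ≤ Fintype.card ι ∨ 2 * (d + 5) + 17 * 2 ^ d ≤ Fintype.card ι := by
  classical
  by_cases hnull : ∀ p, (∀ i, mink (e i) p ≤ 0) → mink p p = 0 → p = 0
  · left
    obtain ⟨N, M, hN, hb⟩ := exists_sizeBound (h.noSquare hnull) d
    subst hn
    exact hN.trans (hb _ (h.cliqueSphere hnull)).1
  · right
    push Not at hnull
    obtain ⟨p, hp, hpp, hp0⟩ := hnull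
    exact h.card_ge_of_ideal hp hpp hp0 hn

end RASystem

/-! ### Linear inequalities -/

section Farkas

variable {V : Type*} [AddCommGroup V] [Module ℝ V] {ι : Type*} [DecidableEq ι]

/-- Farkas' lemma for finitely many linear functionals. -/
lemma exists_nonneg_eq_sum_of_imp_nonpos (s : Finset ι) :
    ∀ (f : ι → V →ₗ[ℝ] ℝ) (g : V →ₗ[ℝ] ℝ), (∀ y, (∀ i ∈ s, f i y ≤ 0) → g y ≤ 0) →
      ∃ r : ι → ℝ, (∀ i ∈ s, 0 ≤ r i) ∧ g = ∑ i ∈ s, r i • f i := by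
  induction s using Finset.induction_on with
  | empty =>
    intro f g h
    refine ⟨0, by simp, LinearMap.ext fun y => ?_⟩
    have h1 := h y (by simp)
    have h2 := h (-y) (by simp)
    rw [map_neg] at h2
    simp only [Finset.sum_empty, LinearMap.zero_apply]
    linarith
  | insert a s ha ih =>
    intro f g h
    by_cases hred : ∀ y, (∀ i ∈ s, f i y ≤ 0) → g y ≤ 0
    · obtain ⟨r, hr, hg⟩ := ih f g hred
      refine ⟨Function.update r a 0, fun i hi => ?_, ?_⟩
      · by_cases hia : i = a
        · subst hia; simp
        · rw [Function.update_of_ne hia]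
          exact hr i ((Finset.mem_insert.1 hi).resolve_left hia)
      · rw [Finset.sum_insert ha, hg, Function.update_self, zero_smul, zero_add]
        refine Finset.sum_congr rfl fun i hi => ?_
        rw [Function.update_of_ne (by rintro rfl; exact ha hi)]
    · push Not at hred
      obtain ⟨y₀, hy₀, hg₀⟩ := hred
      have ha₀ : 0 < f a y₀ := by
        by_contra! hle
        refine absurd (h y₀ fun i hi => ?_) (not_le.2 hg₀)
        rcases Finset.mem_insert.1 hi with rfl | hi
        exacts [hle, hy₀ i hi]
      set y₁ := (f a y₀)⁻¹ • y₀ with hy₁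
      have ha₁ : f a y₁ = 1 := by rw [hy₁, map_smul, smul_eq_mul, inv_mul_cancel₀ ha₀.ne']
      have hf₁ : ∀ i ∈ s, f i y₁ ≤ 0 := fun i hi => by
        rw [hy₁, map_smul, smul_eq_mul]
        exact mul_nonpos_of_nonneg_of_nonpos (inv_pos.2 ha₀).le (hy₀ i hi)
      have hg₁ : 0 ≤ g y₁ := by
        rw [hy₁, map_smul, smul_eq_mul]
        exact (mul_pos (inv_pos.2 ha₀) hg₀).le
      obtain ⟨r, hr, hg⟩ := ih (fun i => f i - f i y₁ • f a) (g - g y₁ • f a) (by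
        intro y hy
        have := h (y - f a y • y₁) fun i hi => by
          rcases Finset.mem_insert.1 hi with rfl | hi
          · simp [ha₁]
          · simpa [mul_comm] using hy i hi
        simpa [mul_comm] using this)
      refine ⟨Function.update r a (g y₁ - ∑ i ∈ s, r i * f i y₁), fun i hi => ?_, ?_⟩
      · by_cases hia : i = a
        · subst hia
          rw [Function.update_self]
          have : ∑ j ∈ s, r j * f j y₁ ≤ 0 := Finset.sum_nonpos fun j hj =>
            mul_nonpos_of_nonneg_of_nonpos (hr j hj) (hf₁ j hj)
          linarith
        · rw [Function.update_of_ne hia]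
          exact hr i ((Finset.mem_insert.1 hi).resolve_left hia)
      · have hsum : ∀ t : ℝ, ∑ i ∈ s, Function.update r a t i • f i = ∑ i ∈ s, r i • f i :=
          fun t => Finset.sum_congr rfl fun i hi => by
            rw [Function.update_of_ne (show i ≠ a by rintro rfl; exact ha hi)]
        simp only [smul_sub, Finset.sum_sub_distrib, smul_smul] at hg
        rw [Finset.sum_insert ha, Function.update_self, hsum]
        refine LinearMap.ext fun z => ?_
        have hz := LinearMap.congr_fun hg z
        simp only [LinearMap.sub_apply, LinearMap.smul_apply, LinearMap.sum_apply, smul_eq_mul,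
          LinearMap.add_apply, sub_mul, Finset.sum_mul] at hz ⊢
        linarith

end Farkas

/-- Passing to an irredundant subsystem of a finite system of inequalities. -/
lemma exists_irredundant {V ι : Type*} [DecidableEq ι] (f : ι → V → ℝ) (W : Set V) (A B : Finset ι)
    (hA : ∀ y ∈ W, (∀ k ∈ A, f k y ≤ 0) → ∀ k ∈ B, f k y ≤ 0) :
    ∃ S ⊆ A, (∀ y ∈ W, (∀ k ∈ S, f k y ≤ 0) → ∀ k ∈ B, f k y ≤ 0) ∧
      ∀ k ∈ S, ∃ y ∈ W, 0 < f k y ∧ ∀ j ∈ S, j ≠ k → f j y ≤ 0 := by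
  classical
  obtain ⟨S, hS, hmin⟩ := Finset.exists_min_image
    (A.powerset.filter fun S => ∀ y ∈ W, (∀ k ∈ S, f k y ≤ 0) → ∀ k ∈ B, f k y ≤ 0)
    Finset.card ⟨A, by simpa using hA⟩
  rw [Finset.mem_filter, Finset.mem_powerset] at hS
  refine ⟨S, hS.1, hS.2, fun k hk => ?_⟩
  by_contra! hc
  have := hmin (S.erase k) (Finset.mem_filter.2 ⟨Finset.mem_powerset.2
    ((Finset.erase_subset _ _).trans hS.1), fun y hy hle => hS.2 y hy fun j hj => ?_⟩)
  · have := Finset.card_erase_lt_of_mem hk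
    omega
  · by_contra! hlt
    have hjk : j = k := by
      by_contra hne
      exact absurd (hle j (Finset.mem_erase.2 ⟨hne, hj⟩)) (not_le.2 hlt)
    subst hjk
    obtain ⟨i, hi, hij, hpos⟩ := hc y hy hlt
    exact absurd (hle i (Finset.mem_erase.2 ⟨hij, hi⟩)) (not_le.2 hpos)

/-! ### The Klein model -/

section Klein

variable {n : ℕ}

/-- The point `(1, x)` above a point of the Klein model. -/
def kleinLift (x : EuclideanSpace ℝ (Fin n)) : Fin (n + 1) → ℝ := Fin.cons 1 fun i => x i

/-- The vector `(0, v)`. -/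
def spatial (v : EuclideanSpace ℝ (Fin n)) : Fin (n + 1) → ℝ := Fin.cons 0 fun i => v i

/-- The spatial part of a vector. -/
def spatialPart (y : Fin (n + 1) → ℝ) : EuclideanSpace ℝ (Fin n) := WithLp.toLp 2 fun i => y i.succ

@[simp] lemma kleinLift_zero (x : EuclideanSpace ℝ (Fin n)) : kleinLift x 0 = 1 := rfl

@[simp] lemma kleinLift_succ (x : EuclideanSpace ℝ (Fin n)) (i : Fin n) :
    kleinLift x i.succ = x i := rfl

@[simp] lemma spatial_zero (x : EuclideanSpace ℝ (Fin n)) : spatial x 0 = 0 := rfl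

@[simp] lemma spatial_succ (x : EuclideanSpace ℝ (Fin n)) (i : Fin n) :
    spatial x i.succ = x i := rfl

@[simp] lemma spatialPart_apply (y : Fin (n + 1) → ℝ) (i : Fin n) :
    spatialPart y i = y i.succ := rfl

lemma spatial_spatialPart {y : Fin (n + 1) → ℝ} (h : y 0 = 0) : spatial (spatialPart y) = y := by
  funext i
  refine Fin.cases ?_ (fun j => ?_) i <;> simp [h]

lemma continuous_kleinLift : Continuous (kleinLift : EuclideanSpace ℝ (Fin n) → _) := by
  refine continuous_pi fun i => ?_
  refine Fin.cases ?_ (fun j => ?_) i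
  · simp only [kleinLift_zero]; fun_prop
  · simp only [kleinLift_succ]; fun_prop

lemma kleinLift_add (x v : EuclideanSpace ℝ (Fin n)) :
    kleinLift (x + v) = kleinLift x + spatial v := by
  funext i
  refine Fin.cases ?_ (fun j => ?_) i <;> simp

lemma spatial_smul (c : ℝ) (v : EuclideanSpace ℝ (Fin n)) : spatial (c • v) = c • spatial v := by
  funext i
  refine Fin.cases ?_ (fun j => ?_) i <;> simp

lemma spatial_add (v w : EuclideanSpace ℝ (Fin n)) : spatial (v + w) = spatial v + spatial w := by
  funext i
  refine Fin.cases ?_ (fun j => ?_) i <;> simp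

lemma spatial_sub (v w : EuclideanSpace ℝ (Fin n)) :
    spatial (v - w) = kleinLift v - kleinLift w := by
  funext i
  refine Fin.cases ?_ (fun j => ?_) i <;> simp

lemma kleinLift_combo (x z : EuclideanSpace ℝ (Fin n)) (t : ℝ) :
    kleinLift ((1 - t) • x + t • z) = (1 - t) • kleinLift x + t • kleinLift z := by
  funext i
  refine Fin.cases ?_ (fun j => ?_) i <;> simp

lemma mink_kleinLift_self (x : EuclideanSpace ℝ (Fin n)) :
    mink (kleinLift x) (kleinLift x) = -1 + ‖x‖ ^ 2 := by
  simp [mink_self_eq, EuclideanSpace.norm_sq_eq]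

lemma mink_kleinLift_neg_iff (x : EuclideanSpace ℝ (Fin n)) :
    mink (kleinLift x) (kleinLift x) < 0 ↔ ‖x‖ < 1 := by
  rw [mink_kleinLift_self, ← sq_lt_one_iff₀ (norm_nonneg x)]
  constructor <;> intro h <;> linarith

lemma norm_le_one_of_mink_nonpos {x : EuclideanSpace ℝ (Fin n)}
    (h : mink (kleinLift x) (kleinLift x) ≤ 0) : ‖x‖ ≤ 1 := by
  rw [mink_kleinLift_self] at h
  rw [← sq_le_one_iff₀ (norm_nonneg x)]
  linarith

lemma kleinLift_kleinMap {y : Fin (n + 1) → ℝ} (h : y 0 ≠ 0) :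
    kleinLift (kleinMap y) = (y 0)⁻¹ • y := by
  funext i
  refine Fin.cases ?_ (fun j => ?_) i
  · simp [h]
  · simp [kleinMap, div_eq_inv_mul]

lemma kleinMap_smul_kleinLift {c : ℝ} (hc : c ≠ 0) (x : EuclideanSpace ℝ (Fin n)) :
    kleinMap (c • kleinLift x) = x := by
  ext i
  simp [kleinMap, hc]

end Klein

namespace HypPolyhedron

variable {n : ℕ} (P : HypPolyhedron n)

lemma kleinMap_image_carrier :
    kleinMap '' P.carrier = {x | ‖x‖ < 1 ∧ ∀ i, mink (P.e i) (kleinLift x) ≤ 0} := by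
  ext x
  constructor
  · rintro ⟨y, ⟨⟨hy1, hy0⟩, hy⟩, rfl⟩
    have hl := kleinLift_kleinMap hy0.ne'
    refine ⟨?_, fun i => ?_⟩
    · rw [← mink_kleinLift_neg_iff, hl]
      simp only [mink_smul_left, mink_smul_right, hy1]
      have := inv_pos.2 hy0
      nlinarith [mul_pos this this]
    · rw [hl, mink_smul_right]
      exact mul_nonpos_of_nonneg_of_nonpos (inv_pos.2 hy0).le (hy i)
  · rintro ⟨hx, hxe⟩
    have hneg := (mink_kleinLift_neg_iff x).2 hx
    set q := -mink (kleinLift x) (kleinLift x) with hq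
    have hq0 : 0 < q := by linarith
    have hc : 0 < (Real.sqrt q)⁻¹ := inv_pos.2 (Real.sqrt_pos.2 hq0)
    refine ⟨(Real.sqrt q)⁻¹ • kleinLift x, ⟨⟨?_, ?_⟩, fun i => ?_⟩,
      kleinMap_smul_kleinLift hc.ne' x⟩
    · have h1 : mink (kleinLift x) (kleinLift x) = -q := by rw [hq, neg_neg]
      have h2 := Real.mul_self_sqrt hq0.le
      have h3 := (Real.sqrt_pos.2 hq0).ne'
      simp only [mink_smul_left, mink_smul_right, h1]
      field_simp
      nlinarith
    · simpa using hq0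
    · rw [mink_smul_right]
      exact mul_nonpos_of_nonneg_of_nonpos hc.le (hxe i)

/-- An interior point satisfies all inequalities strictly. -/
lemma exists_interior_point :
    ∃ x : EuclideanSpace ℝ (Fin n), ‖x‖ < 1 ∧ ∀ i, mink (P.e i) (kleinLift x) < 0 := by
  obtain ⟨x, hx⟩ := P.nonempty_int
  change x ∈ interior (kleinMap '' P.carrier) at hx
  rw [kleinMap_image_carrier] at hx
  have hx' := interior_subset hx
  refine ⟨x, hx'.1, fun i => lt_of_le_of_ne (hx'.2 i) fun h0 => ?_⟩
  set v := spatialPart (P.e i) with hv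
  have hc : Filter.Tendsto (fun ε : ℝ => x + ε • v) (nhdsWithin 0 (Set.Ioi 0)) (nhds x) := by
    have : Continuous fun ε : ℝ => x + ε • v := by fun_prop
    simpa using (this.tendsto 0).mono_left nhdsWithin_le_nhds
  obtain ⟨ε, hε, hε0⟩ := ((hc.eventually (mem_interior_iff_mem_nhds.1 hx)).and
    self_mem_nhdsWithin).exists
  have hle := hε.2 i
  rw [kleinLift_add, spatial_smul, mink_add_right, h0, mink_smul_right, zero_add] at hle
  have hsq : mink (P.e i) (spatial v) = ∑ j : Fin n, P.e i j.succ ^ 2 := by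
    simp [mink, hv, sq]
  have hu := P.unit i
  rw [mink_self_eq, ← hsq] at hu
  have : 0 < mink (P.e i) (spatial v) := by nlinarith [sq_nonneg (P.e i 0)]
  linarith [mul_pos (show (0 : ℝ) < ε from hε0) this]

lemma norm_le_one_of_mem_cl {x : EuclideanSpace ℝ (Fin n)} (hx : x ∈ P.cl) : ‖x‖ ≤ 1 := by
  have : P.cl ⊆ Metric.closedBall 0 1 := by
    refine closure_minimal ?_ Metric.isClosed_closedBall
    rw [kleinMap_image_carrier]
    rintro z ⟨hz, -⟩
    simpa using hz.le
  simpa using this hx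

lemma mem_cl_of_tendsto {x : EuclideanSpace ℝ (Fin n)} {γ : ℝ → EuclideanSpace ℝ (Fin n)}
    (hγ : Continuous γ) (h1 : γ 1 = x)
    (h : ∀ᶠ t in nhdsWithin (1 : ℝ) (Set.Iio 1),
      ‖γ t‖ < 1 ∧ ∀ i, mink (P.e i) (kleinLift (γ t)) ≤ 0) : x ∈ P.cl := by
  rw [cl, kleinMap_image_carrier]
  exact mem_closure_of_tendsto (h1 ▸ (hγ.tendsto 1).mono_left nhdsWithin_le_nhds) h

/-- Points of the unit sphere satisfying all inequalities strictly are vertices. -/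
lemma mem_verts_of_norm_eq_one {x : EuclideanSpace ℝ (Fin n)} (hx : ‖x‖ = 1)
    (h : ∀ i, mink (P.e i) (kleinLift x) < 0) : x ∈ P.verts := by
  have hmem : x ∈ P.cl := by
    refine P.mem_cl_of_tendsto (γ := fun t => t • x) (by fun_prop) (one_smul _ _) ?_
    refine Filter.Eventually.and ?_ (Filter.eventually_all.2 fun i => ?_)
    · filter_upwards [Ioo_mem_nhdsLT (show (0 : ℝ) < 1 by norm_num)] with t ht
      rw [norm_smul, hx, mul_one, Real.norm_eq_abs, abs_of_pos ht.1]
      exact ht.2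
    · have hc : Continuous fun t : ℝ => mink (P.e i) (kleinLift (t • x)) :=
        (continuous_mink _).comp (continuous_kleinLift.comp (by fun_prop))
      have := (hc.tendsto 1).mono_left (nhdsWithin_le_nhds (s := Set.Iio 1))
      filter_upwards [this.eventually_lt_const (by simpa using h i)] with t ht using ht.le
  rintro -
  refine ⟨innerSL ℝ x, ?_⟩
  ext z
  simp only [Set.mem_singleton_iff, Set.mem_ofPred_eq, innerSL_apply_apply]
  constructor
  · rintro rfl
    refine ⟨hmem, fun w hw => ?_⟩
    rw [real_inner_self_eq_norm_sq, hx]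
    have := real_inner_le_norm z w
    rw [hx] at this
    linarith [P.norm_le_one_of_mem_cl hw]
  · rintro ⟨hz, hmax⟩
    have h1 := hmax x hmem
    rw [real_inner_self_eq_norm_sq, hx] at h1
    have h2 := norm_sub_sq_real z x
    have h3 := P.norm_le_one_of_mem_cl hz
    rw [hx, real_inner_comm] at h2
    have h4 : ‖z - x‖ ^ 2 ≤ 0 := by nlinarith [norm_nonneg z]
    have h5 : ‖z - x‖ = 0 := by nlinarith [norm_nonneg (z - x)]
    exact sub_eq_zero.1 (norm_eq_zero.1 h5)

/-- A finite-volume polyhedron has no open part of the sphere at infinity. -/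
lemma not_strict_of_norm_eq_one (hn : 2 ≤ n) (hP : P.FiniteVolume)
    {b : EuclideanSpace ℝ (Fin n)} (hb : ‖b‖ = 1) (h : ∀ i, mink (P.e i) (kleinLift b) < 0) :
    False := by
  obtain ⟨c, hc0, hc⟩ : ∃ c : EuclideanSpace ℝ (Fin n), c ≠ 0 ∧ inner ℝ b c = 0 := by
    have hker : LinearMap.ker (innerSL ℝ b : EuclideanSpace ℝ (Fin n) →ₗ[ℝ] ℝ) ≠ ⊥ :=
      LinearMap.ker_ne_bot_of_finrank_lt (by simp; omega)
    obtain ⟨c, hc, hc0⟩ := Submodule.exists_mem_ne_zero_of_ne_bot hker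
    exact ⟨c, hc0, by simpa using hc⟩
  wlog hc1 : ‖c‖ = 1 generalizing c
  · exact this (‖c‖⁻¹ • c) (smul_ne_zero (inv_ne_zero (norm_ne_zero_iff.2 hc0)) hc0)
      (by rw [inner_smul_right, hc, mul_zero])
      (by rw [norm_smul, norm_inv, norm_norm, inv_mul_cancel₀ (norm_ne_zero_iff.2 hc0)])
  set γ : ℝ → EuclideanSpace ℝ (Fin n) := fun s => Real.cos s • b + Real.sin s • c with hγ
  have hγc : Continuous γ := by fun_prop
  have hγ0 : γ 0 = b := by simp [hγ]
  have hnorm : ∀ s, ‖γ s‖ = 1 := by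
    intro s
    have h1 : ‖γ s‖ ^ 2 = 1 := by
      rw [hγ, norm_add_sq_real, norm_smul, norm_smul, inner_smul_left, inner_smul_right, hc, hb,
        hc1]
      simp
    nlinarith [norm_nonneg (γ s)]
  have hmem : {s | γ s ∈ P.verts} ∈ nhds (0 : ℝ) := by
    have : ∀ᶠ s in nhds (0 : ℝ), ∀ i, mink (P.e i) (kleinLift (γ s)) < 0 := by
      refine Filter.eventually_all.2 fun i => ?_
      have hci : Continuous fun s => mink (P.e i) (kleinLift (γ s)) :=
        (continuous_mink _).comp (continuous_kleinLift.comp hγc)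
      exact (hci.tendsto 0).eventually_lt_const (by rw [hγ0]; exact h i)
    filter_upwards [this] with s hs using P.mem_verts_of_norm_eq_one (hnorm s) hs
  have hI : Set.Icc (-(Real.pi / 2)) (Real.pi / 2) ∈ nhds (0 : ℝ) :=
    Icc_mem_nhds (by linarith [Real.pi_pos]) (by linarith [Real.pi_pos])
  have hinf := infinite_of_mem_nhds (0 : ℝ) (Filter.inter_mem hmem hI)
  refine hinf (Set.Finite.of_finite_image (f := γ) (hP.1.subset ?_) ?_)
  · rintro _ ⟨s, hs, rfl⟩
    exact hs.1
  · intro s hs t ht hst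
    refine Real.injOn_sin hs.2 ht.2 ?_
    have hin : ∀ s, inner ℝ c (γ s) = Real.sin s := by
      intro s
      rw [hγ, inner_add_right, inner_smul_right, inner_smul_right, real_inner_comm, hc,
        real_inner_self_eq_norm_sq, hc1]
      simp
    rw [← hin s, ← hin t, hst]

/-- The cone over a finite-volume polyhedron lies in the future light cone. -/
lemma cone_causal (hn : 2 ≤ n) (hP : P.FiniteVolume) {y : Fin (n + 1) → ℝ}
    (hy : ∀ i, mink (P.e i) y ≤ 0) : 0 ≤ y 0 ∧ mink y y ≤ 0 := by
  by_contra hcon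
  obtain ⟨x, hx1, hx⟩ := P.exists_interior_point
  have hm : Nonempty (Fin P.m) := by
    by_contra hem
    rw [not_nonempty_iff] at hem
    exact P.not_strict_of_norm_eq_one hn hP (b := EuclideanSpace.single ⟨0, by omega⟩ 1) (by simp)
      fun i => hem.elim i
  set g : ℝ → Fin (n + 1) → ℝ := fun t => (1 - t) • kleinLift x + t • y with hg
  have hgc : Continuous g := by fun_prop
  have hnsq : ∀ y : Fin (n + 1) → ℝ, mink y y = -(y 0) ^ 2 + ‖spatialPart y‖ ^ 2 := by
    intro y
    simp [mink_self_eq, EuclideanSpace.norm_sq_eq]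
  have hsp : Continuous (spatialPart : (Fin (n + 1) → ℝ) → EuclideanSpace ℝ (Fin n)) := by
    unfold spatialPart
    fun_prop
  have hfc : Continuous fun t => g t 0 - ‖spatialPart (g t)‖ :=
    ((continuous_apply 0).comp hgc).sub (hsp.comp hgc).norm
  have hend : g 1 0 - ‖spatialPart (g 1)‖ < 0 := by
    have h1 : g 1 = y := by simp [hg]
    rw [h1]
    by_contra! hge
    refine hcon ⟨by linarith [norm_nonneg (spatialPart y)], ?_⟩
    rw [hnsq]
    nlinarith [norm_nonneg (spatialPart y)]
  have hstart : 0 < g 0 0 - ‖spatialPart (g 0)‖ := by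
    have h1 : g 0 = kleinLift x := by simp [hg]
    have h2 : spatialPart (kleinLift x) = x := by ext i; simp
    rw [h1, h2, kleinLift_zero]
    linarith
  obtain ⟨t, ht, ht0⟩ := intermediate_value_Icc' (zero_le_one (α := ℝ)) hfc.continuousOn
    ⟨hend.le, hstart.le⟩
  have ht1 : t < 1 := by
    refine lt_of_le_of_ne ht.2 ?_
    rintro rfl
    simp only at ht0
    linarith
  simp only at ht0
  have hneg : ∀ i, mink (P.e i) (g t) < 0 := by
    intro i
    rw [hg]
    simp only [mink_add_right, mink_smul_right]
    have := mul_neg_of_pos_of_neg (sub_pos.2 ht1) (hx i)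
    linarith [mul_nonpos_of_nonneg_of_nonpos ht.1 (hy i)]
  have hnull : mink (g t) (g t) = 0 := by
    rw [hnsq, show g t 0 = ‖spatialPart (g t)‖ by linarith]
    ring
  have hne : g t ≠ 0 := by
    intro h0
    have := hneg hm.some
    rw [h0, mink_zero_right] at this
    exact lt_irrefl _ this
  have ht00 := time_ne_zero_of_causal hnull.le hne
  have hpos : 0 < g t 0 := lt_of_le_of_ne
    (by rw [sub_eq_zero.1 ht0]; exact norm_nonneg _) ht00.symm
  have hl := kleinLift_kleinMap ht00
  refine P.not_strict_of_norm_eq_one hn hP (b := kleinMap (g t)) ?_ fun i => ?_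
  · have h1 := mink_kleinLift_self (kleinMap (g t))
    rw [hl] at h1
    simp only [mink_smul_left, mink_smul_right, hnull, mul_zero] at h1
    nlinarith [norm_nonneg (kleinMap (g t))]
  · rw [hl, mink_smul_right]
    exact mul_neg_of_pos_of_neg (inv_pos.2 hpos) (hneg i)

lemma mem_cl_iff (hn : 2 ≤ n) (hP : P.FiniteVolume) {x : EuclideanSpace ℝ (Fin n)} :
    x ∈ P.cl ↔ ∀ i, mink (P.e i) (kleinLift x) ≤ 0 := by
  constructor
  · intro hx i
    have hcl : IsClosed {x : EuclideanSpace ℝ (Fin n) | mink (P.e i) (kleinLift x) ≤ 0} :=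
      isClosed_le ((continuous_mink _).comp continuous_kleinLift) continuous_const
    refine closure_minimal ?_ hcl hx
    rw [kleinMap_image_carrier]
    exact fun z hz => hz.2 i
  · intro hx
    obtain ⟨x₀, hx₀, hx₀'⟩ := P.exists_interior_point
    have hx1 := norm_le_one_of_mink_nonpos (P.cone_causal hn hP hx).2
    refine P.mem_cl_of_tendsto (γ := fun t => (1 - t) • x₀ + t • x) (by fun_prop) (by simp) ?_
    filter_upwards [Ioo_mem_nhdsLT (show (0 : ℝ) < 1 by norm_num)] with t ht
    refine ⟨?_, fun i => ?_⟩
    · refine (norm_add_le _ _).trans_lt ?_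
      rw [norm_smul, norm_smul, Real.norm_eq_abs, Real.norm_eq_abs, abs_of_pos ht.1,
        abs_of_pos (sub_pos.2 ht.2)]
      nlinarith [ht.1, ht.2]
    · rw [kleinLift_combo, mink_add_right, mink_smul_right, mink_smul_right]
      nlinarith [ht.1, ht.2, hx i, hx₀' i]

lemma finite_faces (hP : P.FiniteVolume) (k : ℕ) : (P.faces k).Finite := by
  have hcomp : IsCompact P.cl := by
    refine Metric.isCompact_of_isClosed_isBounded isClosed_closure ?_
    refine (Metric.isBounded_closedBall (x := (0 : EuclideanSpace ℝ (Fin n))) (r := 1)).subset ?_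
    intro x hx
    simpa using P.norm_le_one_of_mem_cl hx
  have hconv : Convex ℝ P.cl := by rw [hP.2]; exact convex_convexHull ℝ _
  refine Set.Finite.of_finite_image (f := fun F => F.extremePoints ℝ)
    (hP.1.finite_subsets.subset ?_) ?_
  · rintro _ ⟨F, hF, rfl⟩
    have h1 := hF.1.isExtreme.extremePoints_subset_extremePoints
    refine h1.trans ?_
    rw [hP.2]
    exact extremePoints_convexHull_subset
  · intro F hF F' hF' heq
    simp only at heq
    rw [← closure_convexHull_extremePoints (hF.1.isCompact hcomp) (hF.1.convex hconv), heq,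
      closure_convexHull_extremePoints (hF'.1.isCompact hcomp) (hF'.1.convex hconv)]

end HypPolyhedron

/-! ### Faces cut out by bounding hyperplanes -/

/-- The inclusion of the spatial hyperplane as a linear map. -/
def spatialLin (n : ℕ) : EuclideanSpace ℝ (Fin n) →ₗ[ℝ] (Fin (n + 1) → ℝ) where
  toFun := spatial
  map_add' := spatial_add
  map_smul' := spatial_smul

@[simp] lemma spatialLin_apply {n : ℕ} (v : EuclideanSpace ℝ (Fin n)) :
    spatialLin n v = spatial v := rfl

namespace HypPolyhedron

variable {n : ℕ} (P : HypPolyhedron n)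

/-- The part of `P̄` on the bounding hyperplanes indexed by `T`. -/
def faceOn (T : Finset (Fin P.m)) : Set (EuclideanSpace ℝ (Fin n)) :=
  {x ∈ P.cl | ∀ t ∈ T, mink (P.e t) (kleinLift x) = 0}

/-- The inequalities indexed by `A`, satisfied strictly at a point `z`, define `P` on the
intersection of the hyperplanes indexed by `T`, and these hyperplanes are independent. -/
structure IsTransverse (T A : Finset (Fin P.m)) (z : Fin (n + 1) → ℝ) : Prop where
  card_le : T.card ≤ n
  eq_zero : ∀ t ∈ T, mink (P.e t) z = 0
  neg : ∀ j ∈ A, mink (P.e j) z < 0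
  imp : ∀ y, (∀ t ∈ T, mink (P.e t) y = 0) → (∀ j ∈ A, mink (P.e j) y ≤ 0) →
    ∀ i, mink (P.e i) y ≤ 0
  indep : ∀ t ∈ T, ∃ y, mink (P.e t) y ≠ 0 ∧ ∀ s ∈ T, s ≠ t → mink (P.e s) y = 0

variable {P} {T A : Finset (Fin P.m)} {z : Fin (n + 1) → ℝ}

lemma IsTransverse.nonpos (h : P.IsTransverse T A z) (i : Fin P.m) : mink (P.e i) z ≤ 0 :=
  h.imp z h.eq_zero (fun j hj => (h.neg j hj).le) i

lemma IsTransverse.time_pos (h : P.IsTransverse T A z) (hn : 2 ≤ n) (hP : P.FiniteVolume) :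
    0 < z 0 := by
  obtain ⟨h0, hc⟩ := P.cone_causal hn hP h.nonpos
  refine lt_of_le_of_ne h0 (Ne.symm (time_ne_zero_of_causal hc ?_))
  rintro rfl
  have hA : ∀ j, j ∉ A := fun j hj => by simpa using h.neg j hj
  have hker : LinearMap.ker (LinearMap.pi fun t : T => minkLin (P.e t)) ≠ ⊥ :=
    LinearMap.ker_ne_bot_of_finrank_lt (by simpa using Nat.lt_succ_of_le h.card_le)
  obtain ⟨y, hy, hy0⟩ := Submodule.exists_mem_ne_zero_of_ne_bot hker
  have hy' : ∀ t ∈ T, mink (P.e t) y = 0 := fun t ht => congrFun hy ⟨t, ht⟩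
  have h1 := P.cone_causal hn hP (h.imp y hy' fun j hj => absurd hj (hA j))
  have h2 := P.cone_causal hn hP
    (h.imp (-y) (fun t ht => by simp [hy' t ht]) fun j hj => absurd hj (hA j))
  have h3 := h2.1
  simp only [Pi.neg_apply] at h3
  exact time_ne_zero_of_causal h1.2 hy0 (by linarith [h1.1])

lemma IsTransverse.mink_kleinLift_kleinMap (h : P.IsTransverse T A z) (hn : 2 ≤ n)
    (hP : P.FiniteVolume) (i : Fin P.m) :
    mink (P.e i) (kleinLift (kleinMap z)) = (z 0)⁻¹ * mink (P.e i) z := by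
  rw [kleinLift_kleinMap (h.time_pos hn hP).ne', mink_smul_right]

lemma IsTransverse.kleinMap_mem (h : P.IsTransverse T A z) (hn : 2 ≤ n) (hP : P.FiniteVolume) :
    kleinMap z ∈ P.faceOn T := by
  refine ⟨(P.mem_cl_iff hn hP).2 fun i => ?_, fun t ht => ?_⟩ <;>
    rw [h.mink_kleinLift_kleinMap hn hP]
  · exact mul_nonpos_of_nonneg_of_nonpos (inv_pos.2 (h.time_pos hn hP)).le (h.nonpos i)
  · rw [h.eq_zero t ht, mul_zero]

lemma IsTransverse.isExposed (h : P.IsTransverse T A z) (hn : 2 ≤ n) (hP : P.FiniteVolume) :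
    IsExposed ℝ P.cl (P.faceOn T) := by
  rintro -
  refine ⟨LinearMap.toContinuousLinearMap
    (∑ t ∈ T, (minkLin (P.e t)).comp (spatialLin n)), ?_⟩
  have hdiff : ∀ x y : EuclideanSpace ℝ (Fin n), (∀ t ∈ T, mink (P.e t) (kleinLift y) = 0) →
      (∑ t ∈ T, (minkLin (P.e t)).comp (spatialLin n)) x -
        (∑ t ∈ T, (minkLin (P.e t)).comp (spatialLin n)) y =
      ∑ t ∈ T, mink (P.e t) (kleinLift x) := by
    intro x y hy
    rw [← map_sub, LinearMap.sum_apply]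
    refine Finset.sum_congr rfl fun t ht => ?_
    simp [spatial_sub, hy t ht]
  have hp := h.kleinMap_mem hn hP
  ext x
  simp only [LinearMap.coe_toContinuousLinearMap', Set.mem_ofPred_eq]
  constructor
  · rintro ⟨hx, hxT⟩
    refine ⟨hx, fun y hy => ?_⟩
    have hle : ∑ t ∈ T, mink (P.e t) (kleinLift y) ≤ 0 :=
      Finset.sum_nonpos fun t _ => (P.mem_cl_iff hn hP).1 hy t
    linarith [hdiff y x hxT]
  · rintro ⟨hx, hmax⟩
    refine ⟨hx, ?_⟩
    have hle : ∀ t ∈ T, mink (P.e t) (kleinLift x) ≤ 0 :=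
      fun t _ => (P.mem_cl_iff hn hP).1 hx t
    rw [← Finset.sum_eq_zero_iff_of_nonpos hle]
    refine le_antisymm (Finset.sum_nonpos hle) ?_
    linarith [hdiff x _ hp.2, hmax _ hp.1]

lemma IsTransverse.vectorSpan_faceOn (h : P.IsTransverse T A z) (hn : 2 ≤ n)
    (hP : P.FiniteVolume) : vectorSpan ℝ (P.faceOn T) =
      LinearMap.ker (LinearMap.pi fun t : T => (minkLin (P.e t)).comp (spatialLin n)) := by
  have hp := h.kleinMap_mem hn hP
  apply le_antisymm
  · rw [vectorSpan_def, Submodule.span_le]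
    rintro _ ⟨x, hx, y, hy, rfl⟩
    ext t
    simp [spatial_sub, hx.2 t t.2, hy.2 t t.2]
  · intro v hv
    have hv' : ∀ t ∈ T, mink (P.e t) (spatial v) = 0 := fun t ht => congrFun hv ⟨t, ht⟩
    have hneg : ∀ j ∈ A, mink (P.e j) (kleinLift (kleinMap z)) < 0 := fun j hj => by
      rw [h.mink_kleinLift_kleinMap hn hP]
      exact mul_neg_of_pos_of_neg (inv_pos.2 (h.time_pos hn hP)) (h.neg j hj)
    obtain ⟨ε, hε, hεA⟩ := exists_pos_forall_add_mul_nonpos A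
      (fun j => mink (P.e j) (kleinLift (kleinMap z))) (fun j => mink (P.e j) (spatial v))
      (fun j hj => (hneg j hj).le) fun j hj h0 => absurd h0 (hneg j hj).ne
    have hval : ∀ i, mink (P.e i) (kleinLift (kleinMap z + ε • v)) =
        mink (P.e i) (kleinLift (kleinMap z)) + ε * mink (P.e i) (spatial v) := fun i => by
      rw [kleinLift_add, spatial_smul, mink_add_right, mink_smul_right]
    have hzero : ∀ t ∈ T, mink (P.e t) (kleinLift (kleinMap z + ε • v)) = 0 := fun t ht => by
      rw [hval, hp.2 t ht, hv' t ht, mul_zero, add_zero]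
    have hmem : kleinMap z + ε • v ∈ P.faceOn T :=
      ⟨(P.mem_cl_iff hn hP).2 (h.imp _ hzero fun j hj => by rw [hval]; exact hεA j hj), hzero⟩
    have := vsub_mem_vectorSpan ℝ hmem hp
    rw [vsub_eq_sub, add_sub_cancel_left] at this
    exact (Submodule.smul_mem_iff _ hε.ne').1 this

lemma IsTransverse.faceOn_mem_faces (h : P.IsTransverse T A z) (hn : 2 ≤ n)
    (hP : P.FiniteVolume) : P.faceOn T ∈ P.faces (n - T.card) := by
  refine ⟨h.isExposed hn hP, ⟨_, h.kleinMap_mem hn hP⟩, ?_⟩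
  rw [sdim, h.vectorSpan_faceOn hn hP]
  set Φ := LinearMap.pi fun t : T => (minkLin (P.e t)).comp (spatialLin n) with hΦ
  have hz0 := (h.time_pos hn hP).ne'
  have hsurj : LinearMap.range Φ = ⊤ := by
    rw [LinearMap.range_eq_top]
    intro w
    choose! y hy hys using h.indep
    refine ⟨∑ t : T, (w t / mink (P.e t) (y t)) • spatialPart (y t - (y t 0 / z 0) • z), ?_⟩
    have hsp : ∀ s t : T, mink (P.e s) (spatial (spatialPart (y t - (y t 0 / z 0) • z))) =
        mink (P.e s) (y t) := fun s t => by
      rw [spatial_spatialPart (by simp [hz0])]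
      simp [h.eq_zero s s.2]
    ext s
    rw [map_sum, Finset.sum_apply, Finset.sum_eq_single s]
    · simp [hΦ, hsp, hy s s.2]
    · intro t _ hts
      simp [hΦ, hsp, hys t t.2 s s.2 (fun hst => hts (Subtype.ext hst).symm)]
    · simp
  have := LinearMap.finrank_range_add_finrank_ker Φ
  rw [hsurj, finrank_top] at this
  simp at this
  omega

lemma faceInHyperplane_faceOn {t : Fin P.m} (ht : t ∈ T) :
    P.faceInHyperplane (P.e t) (P.faceOn T) := by
  rintro x ⟨⟨-, hx0⟩, -⟩ hxF
  have := hxF.2 t ht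
  rw [kleinLift_kleinMap hx0.ne', mink_smul_right] at this
  exact (mul_eq_zero.1 this).resolve_left (inv_ne_zero hx0.ne')

/-! ### Reduction to an irredundant system -/

variable (P) in
/-- A minimal set of inequalities defining `P`. -/
structure IsIrredundant (S : Finset (Fin P.m)) : Prop where
  imp : ∀ y, (∀ k ∈ S, mink (P.e k) y ≤ 0) → ∀ i, mink (P.e i) y ≤ 0
  sep : ∀ k ∈ S, ∃ y, 0 < mink (P.e k) y ∧ ∀ j ∈ S, j ≠ k → mink (P.e j) y ≤ 0

variable (P) in
lemma exists_isIrredundant : ∃ S, P.IsIrredundant S := by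
  obtain ⟨S, -, h1, h2⟩ := exists_irredundant (fun i => mink (P.e i)) Set.univ Finset.univ
    Finset.univ fun _ _ h => h
  exact ⟨S, fun y hy i => h1 y trivial hy i (Finset.mem_univ i), fun k hk => by
    obtain ⟨y, -, hy⟩ := h2 k hk
    exact ⟨y, hy⟩⟩

variable {S : Finset (Fin P.m)}

lemma IsIrredundant.exists_isTransverse (h : P.IsIrredundant S) (hn : 2 ≤ n) {i : Fin P.m}
    (hi : i ∈ S) : ∃ z, P.IsTransverse {i} (S.erase i) z := by
  obtain ⟨x, -, hx⟩ := P.exists_interior_point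
  obtain ⟨y, hy, hyS⟩ := h.sep i hi
  refine ⟨mink (P.e i) y • kleinLift x - mink (P.e i) (kleinLift x) • y, ?_, ?_, ?_, ?_, ?_⟩
  · simp; omega
  · simp [mul_comm]
  · intro j hj
    rw [Finset.mem_erase] at hj
    simp only [mink_sub_right, mink_smul_right]
    nlinarith [mul_neg_of_pos_of_neg hy (hx j),
      mul_nonneg_of_nonpos_of_nonpos (hx i).le (hyS j hj.2 hj.1)]
  · intro w hw hwS
    refine h.imp w fun k hk => ?_
    by_cases hki : k = i
    · exact (hw k (by simp [hki])).le
    · exact hwS k (Finset.mem_erase.2 ⟨hki, hk⟩)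
  · simpa using ⟨kleinLift x, (hx i).ne⟩

lemma IsIrredundant.card_le (h : P.IsIrredundant S) (hn : 2 ≤ n) (hP : P.FiniteVolume) :
    S.card ≤ P.a (n - 1) := by
  rw [a, ← Set.ncard_coe_finset]
  refine Set.ncard_le_ncard_of_injOn (fun i => P.faceOn {i}) (fun i hi => ?_) ?_
    (P.finite_faces hP _)
  · obtain ⟨z, hz⟩ := h.exists_isTransverse hn hi
    simpa using hz.faceOn_mem_faces hn hP
  · intro i hi j hj hij
    by_contra hne
    obtain ⟨z, hz⟩ := h.exists_isTransverse hn hi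
    have hmem := hz.kleinMap_mem hn hP
    simp only at hij
    rw [hij] at hmem
    have h0 := hmem.2 j (by simp)
    rw [hz.mink_kleinLift_kleinMap hn hP] at h0
    have hneg := hz.neg j (Finset.mem_erase.2 ⟨Ne.symm hne, hj⟩)
    exact (mul_neg_of_pos_of_neg (inv_pos.2 (hz.time_pos hn hP)) hneg).ne h0

/-- The facets adjacent to a given facet define it and are orthogonal to it. -/
lemma IsIrredundant.exists_adjacent (h : P.IsIrredundant S) (hn : 2 ≤ n) (hP : P.FiniteVolume)
    (hR : P.IsRightAngled) {i : Fin P.m} (hi : i ∈ S) :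
    ∃ S' ⊆ S.erase i, (∀ k ∈ S', mink (P.e i) (P.e k) = 0) ∧
      ∀ y, mink (P.e i) y = 0 → (∀ k ∈ S', mink (P.e k) y ≤ 0) → ∀ j, mink (P.e j) y ≤ 0 := by
  obtain ⟨x, -, hx⟩ := P.exists_interior_point
  obtain ⟨z, hz⟩ := h.exists_isTransverse hn hi
  have hzi := hz.eq_zero i (by simp)
  obtain ⟨S', hS', h1, h2⟩ := exists_irredundant (fun i => mink (P.e i))
    {y | mink (P.e i) y = 0} (S.erase i) Finset.univ
    fun y hy hyS j _ => hz.imp y (by simpa using hy) hyS j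
  refine ⟨S', hS', fun k hk => ?_, fun y hy hyS j => h1 y hy hyS j (Finset.mem_univ j)⟩
  obtain ⟨y, hyi, hy, hyS⟩ := h2 k hk
  simp only [Set.mem_ofPred_eq] at hyi
  have hki : k ≠ i := (Finset.mem_erase.1 (hS' hk)).1
  have htr : P.IsTransverse {i, k} (S'.erase k) (mink (P.e k) y • z - mink (P.e k) z • y) := by
    refine ⟨?_, ?_, ?_, ?_, ?_⟩
    · exact Finset.card_le_two.trans hn
    · simp [hzi, hyi, mul_comm]
    · intro j hj
      rw [Finset.mem_erase] at hj
      simp only [mink_sub_right, mink_smul_right]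
      nlinarith [mul_neg_of_pos_of_neg hy (hz.neg j (hS' hj.2)),
        mul_nonneg_of_nonpos_of_nonpos (hz.neg k (hS' hk)).le (hyS j hj.2 hj.1)]
    · intro w hw hwS j
      refine h1 w (hw i (by simp)) (fun l hl => ?_) j (Finset.mem_univ j)
      by_cases hlk : l = k
      · exact (hw l (by simp [hlk])).le
      · exact hwS l (Finset.mem_erase.2 ⟨hlk, hl⟩)
    · intro t ht
      simp only [Finset.mem_insert, Finset.mem_singleton] at ht
      rcases ht with rfl | rfl
      · refine ⟨kleinLift x - (mink (P.e k) (kleinLift x) / mink (P.e k) y) • y, ?_, ?_⟩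
        · simpa [hyi] using (hx t).ne
        · intro s hs hst
          obtain rfl : s = k := by simpa [hst] using hs
          simp [hy.ne']
      · refine ⟨y, hy.ne', fun s hs hst => ?_⟩
        obtain rfl : s = i := by simpa [hst] using hs
        exact hyi
  refine hR i k hki.symm ⟨P.faceOn {i, k}, ?_, faceInHyperplane_faceOn (by simp),
    faceInHyperplane_faceOn (by simp)⟩
  simpa [Finset.card_pair hki.symm] using htr.faceOn_mem_faces hn hP

/-- A non-adjacent facet is in the span of a facet and its adjacent facets. -/
lemma IsIrredundant.exists_eq_sum (h : P.IsIrredundant S) (hn : 2 ≤ n) (hP : P.FiniteVolume)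
    (hR : P.IsRightAngled) {i j : Fin P.m} (hi : i ∈ S) (hj : j ∈ S) (hji : j ≠ i)
    (h0 : mink (P.e j) (P.e i) ≠ 0) :
    mink (P.e j) (P.e i) < 0 ∧ ∃ (S' : Finset (Fin P.m)) (r : Fin P.m → ℝ), S' ⊆ S ∧ j ∉ S' ∧
      (∀ k ∈ S', 0 ≤ r k) ∧ ∀ y, mink (P.e j) y =
        mink (P.e j) (P.e i) * mink (P.e i) y + ∑ k ∈ S', r k * mink (P.e k) y := by
  obtain ⟨S', hS', horth, himp⟩ := h.exists_adjacent hn hP hR hi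
  have hjS' : j ∉ S' := fun hj' => h0 (by rw [mink_comm]; exact horth j hj')
  obtain ⟨r, hr, hsum⟩ := exists_nonneg_eq_sum_of_imp_nonpos S' (fun k => minkLin (P.e k))
    (minkLin (P.e j) - mink (P.e j) (P.e i) • minkLin (P.e i)) (by
      intro y hy
      have := himp (y - mink (P.e i) y • P.e i) (by simp [P.unit]) (fun k hk => by
        have := hy k hk
        simpa [mink_comm _ (P.e i), horth k hk] using this) j
      simp only [mink_sub_right, mink_smul_right] at this
      simp only [LinearMap.sub_apply, LinearMap.smul_apply, minkLin_apply, smul_eq_mul]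
      linarith)
  have hexp : ∀ y, mink (P.e j) y =
      mink (P.e j) (P.e i) * mink (P.e i) y + ∑ k ∈ S', r k * mink (P.e k) y := by
    intro y
    have := LinearMap.congr_fun hsum y
    simp only [LinearMap.sub_apply, LinearMap.smul_apply, minkLin_apply, smul_eq_mul,
      LinearMap.sum_apply] at this
    linarith
  refine ⟨?_, S', r, fun k hk => (Finset.mem_erase.1 (hS' hk)).2, hjS', hr, hexp⟩
  by_contra! hge
  obtain ⟨y, hy, hyS⟩ := h.sep j hj
  have h1 := mul_nonpos_of_nonneg_of_nonpos hge (hyS i hi hji.symm)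
  have h2 : ∑ k ∈ S', r k * mink (P.e k) y ≤ 0 := Finset.sum_nonpos fun k hk =>
    mul_nonpos_of_nonneg_of_nonpos (hr k hk) (hyS k (Finset.mem_erase.1 (hS' hk)).2
      (fun hkj => hjS' (hkj ▸ hk)))
  linarith [hexp y]

lemma IsIrredundant.gram (h : P.IsIrredundant S) (hn : 2 ≤ n) (hP : P.FiniteVolume)
    (hR : P.IsRightAngled) {i j : Fin P.m} (hi : i ∈ S) (hj : j ∈ S) (hji : j ≠ i) :
    mink (P.e j) (P.e i) = 0 ∨ mink (P.e j) (P.e i) ≤ -1 := by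
  refine or_iff_not_imp_left.2 fun h0 => ?_
  obtain ⟨hneg, S', r, hS', hjS', hr, hexp⟩ := h.exists_eq_sum hn hP hR hi hj hji h0
  have hnonpos : ∀ k ∈ S', mink (P.e k) (P.e j) ≤ 0 := fun k hk => by
    by_contra! hpos
    exact absurd (h.exists_eq_sum hn hP hR hj (hS' hk) (fun hkj => hjS' (hkj ▸ hk))
      hpos.ne').1 (not_lt.2 hpos.le)
  have h2 : ∑ k ∈ S', r k * mink (P.e k) (P.e j) ≤ 0 := Finset.sum_nonpos fun k hk =>
    mul_nonpos_of_nonneg_of_nonpos (hr k hk) (hnonpos k hk)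
  have h3 := hexp (P.e j)
  rw [P.unit, mink_comm (P.e i)] at h3
  nlinarith

lemma IsIrredundant.exists_raSystem (h : P.IsIrredundant S) (hn : 2 ≤ n) (hP : P.FiniteVolume)
    (hR : P.IsRightAngled) : ∃ y, RASystem (fun i : S => P.e i) y := by
  obtain ⟨x, hx1, hx⟩ := P.exists_interior_point
  exact ⟨kleinLift x,
    { unit := fun i => P.unit i
      gram := fun i j hij => h.gram hn hP hR j.2 i.2 (fun h' => hij (Subtype.ext h'))
      neg := fun i => hx i
      timelike := (mink_kleinLift_neg_iff x).2 hx1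
      future := by simp
      cone := fun y hy => P.cone_causal hn hP (h.imp y fun k hk => hy ⟨k, hk⟩) }⟩

lemma le_card_facets {d : ℕ} {P : HypPolyhedron (d + 6)} (hP : P.FiniteVolume)
    (hR : P.IsRightAngled) : 5509 ≤ P.a (d + 5) ∨ 2 * (d + 5) + 17 * 2 ^ d ≤ P.a (d + 5) := by
  obtain ⟨S, hS⟩ := P.exists_isIrredundant
  obtain ⟨y, hy⟩ := hS.exists_raSystem (by omega) hP hR
  have hle : S.card ≤ P.a (d + 5) := hS.card_le (by omega) hP
  have := hy.card_ge rfl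
  rw [Fintype.card_coe] at this
  exact this.imp hle.trans' hle.trans'

end HypPolyhedron

/-- Every `9`-dimensional finite-volume right-angled convex hyperbolic polyhedron has at
least `152` facets, and every `11`-dimensional one has at least `564` facets. -/
theorem facets_of_9_and_11_polyhedra :
    (∀ P : HypPolyhedron 9, P.FiniteVolume → P.IsRightAngled → 152 ≤ P.a 8) ∧
      (∀ P : HypPolyhedron 11, P.FiniteVolume → P.IsRightAngled → 564 ≤ P.a 10) := by
  refine ⟨fun P hP hR => ?_, fun P hP hR => ?_⟩
  · have := HypPolyhedron.le_card_facets (d := 3) hP hR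
    norm_num at this
    omega
  · have := HypPolyhedron.le_card_facets (d := 5) hP hR
    norm_num at this
    omega
end
end

section
/- Let P be a convex hyperbolic n-polyhedron (n ≥ 2), viewed in the Klein model as a convex subset of the open unit ball of ℝⁿ, and let μ be the hyperbolic volume measure on the open unit ball, i.e. the measure with density (1 − |x|²)^{−(n+1)/2} with respect to Lebesgue measure. Then μ(P) < ∞ if and only if the closure of P in ℝⁿ is the convex hull of a finite set of points of the closed unit ball (equivalently, the convex hull of its vertices). -/
open scoped BigOperators

noncomputable section

/-- The hyperbolic volume measure on the Klein ball: density `(1 - |x|²)^{-(n+1)/2}`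
with respect to Lebesgue measure. -/
def hypVolume (n : ℕ) : MeasureTheory.Measure (EuclideanSpace ℝ (Fin n)) :=
  MeasureTheory.volume.withDensity
    (fun x => ENNReal.ofReal ((1 - ‖x‖ ^ 2) ^ (-((n : ℝ) + 1) / 2)))

section Polytopes

variable {E ι : Type*} [NormedAddCommGroup E] [NormedSpace ℝ E]

/-- Two extreme points of a polyhedron with the same active constraints coincide. -/
lemma extremePoints_polyhedron_injOn_active [Finite ι] (f : ι → E →L[ℝ] ℝ) (b : ι → ℝ) :
    Set.InjOn (fun x => {i | f i x = b i}) (Set.extremePoints ℝ {x | ∀ i, f i x ≤ b i}) := by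
  intro x hx y hy hxy
  have hact : ∀ i, f i x = b i ↔ f i y = b i := fun i => Set.ext_iff.1 hxy i
  have hlim : ∀ i, ∀ᶠ t : ℝ in nhdsWithin 0 (Set.Ioi 0), f i (x + t • (x - y)) ≤ b i := by
    intro i
    rcases (hx.1 i).lt_or_eq with h | h
    · have hc : ContinuousAt (fun t : ℝ => f i (x + t • (x - y))) 0 := by fun_prop
      refine nhdsWithin_le_nhds ?_
      filter_upwards [hc.eventually_lt_const (u := b i) (by simpa using h)] with t ht using ht.le
    · refine Filter.Eventually.of_forall fun t => ?_
      simp [h, (hact i).1 h]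
  obtain ⟨t, ht, ht0⟩ :=
    ((Filter.eventually_all.2 hlim).and self_mem_nhdsWithin).exists
  have ht0 : 0 < t := ht0
  refine ((mem_extremePoints.1 hx).2 _ ht y hy.1 ?_).2.symm
  refine ⟨1 / (1 + t), t / (1 + t), by positivity, by positivity, by field_simp, ?_⟩
  match_scalars
  · field_simp
  · field_simp
    ring

lemma finite_extremePoints_polyhedron [Finite ι] (f : ι → E →L[ℝ] ℝ) (b : ι → ℝ) :
    (Set.extremePoints ℝ {x | ∀ i, f i x ≤ b i}).Finite :=
  Set.Finite.of_finite_image (Set.toFinite _) (extremePoints_polyhedron_injOn_active f b)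

/-- A compact polyhedron is the convex hull of finitely many of its points. -/
lemma exists_finset_convexHull_eq_polyhedron [Finite ι] (f : ι → E →L[ℝ] ℝ) (b : ι → ℝ)
    (hcomp : IsCompact {x | ∀ i, f i x ≤ b i}) (hconv : Convex ℝ {x | ∀ i, f i x ≤ b i}) :
    ∃ s : Finset E, (s : Set E) ⊆ {x | ∀ i, f i x ≤ b i} ∧
      {x | ∀ i, f i x ≤ b i} = convexHull ℝ (s : Set E) := by
  have hfin := finite_extremePoints_polyhedron f b
  refine ⟨hfin.toFinset, by simpa using extremePoints_subset, ?_⟩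
  rw [hfin.coe_toFinset, ← (hfin.isClosed_convexHull ℝ).closure_eq,
    closure_convexHull_extremePoints hcomp hconv]

end Polytopes

section Comparison

variable {E : Type*} [NormedAddCommGroup E] [InnerProductSpace ℝ E]

lemma exists_pos_le_dist_of_finset {X : Type*} [MetricSpace X] (s : Finset X) :
    ∃ δ > 0, ∀ v ∈ s, ∀ w ∈ s, v ≠ w → δ ≤ dist v w := by
  have h : ∀ᶠ δ : ℝ in nhdsWithin 0 (Set.Ioi 0), ∀ v ∈ s, ∀ w ∈ s, v ≠ w → δ ≤ dist v w := by
    refine (Finset.eventually_all s).2 fun v _ => (Finset.eventually_all s).2 fun w _ => ?_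
    by_cases hvw : v = w
    · exact Filter.Eventually.of_forall fun _ h => absurd hvw h
    · filter_upwards [Ioo_mem_nhdsGT (dist_pos.2 hvw)] with δ hδ _ using hδ.2.le
  obtain ⟨δ, hδ, hδ0⟩ := (h.and self_mem_nhdsWithin).exists
  exact ⟨δ, hδ0, hδ⟩

/-- On the convex hull of a finite subset of the closed unit ball, the distance to the sphere is
bounded below by a multiple of the distance to the finite set. -/
lemma exists_mul_norm_sub_le_one_sub_sq (s : Finset E)
    (hs : (s : Set E) ⊆ Metric.closedBall 0 1) :
    ∃ c > 0, ∀ x ∈ convexHull ℝ (s : Set E), ∃ v ∈ s, c * ‖x - v‖ ≤ 1 - ‖x‖ ^ 2 := by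
  obtain ⟨δ, hδ0, hδ⟩ := exists_pos_le_dist_of_finset s
  refine ⟨δ ^ 2 / 8, by positivity, fun x hx => ?_⟩
  have hne : s.Nonempty := Finset.coe_nonempty.1 (convexHull_nonempty_iff.1 ⟨x, hx⟩)
  obtain ⟨t, ht0, ht1, htx⟩ := Finset.mem_convexHull'.1 hx
  obtain ⟨v, hv, hmin⟩ := s.exists_min_image (fun w => dist w x) hne
  have hnorm : ∀ w ∈ s, ‖w‖ ≤ 1 := fun w hw => by simpa using hs hw
  refine ⟨v, hv, ?_⟩
  have hvar : ∑ w ∈ s, t w * ‖w - x‖ ^ 2 ≤ 1 - ‖x‖ ^ 2 := by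
    have hinner : ∑ w ∈ s, t w * inner ℝ w x = ‖x‖ ^ 2 := by
      rw [← real_inner_self_eq_norm_sq]
      nth_rewrite 2 [← htx]
      rw [sum_inner]
      simp [real_inner_smul_left]
    have hsq : ∑ w ∈ s, t w * ‖w‖ ^ 2 ≤ 1 := by
      rw [← ht1]
      refine Finset.sum_le_sum fun w hw => mul_le_of_le_one_right (ht0 w hw) ?_
      exact pow_le_one₀ (norm_nonneg _) (hnorm w hw)
    have hexp : ∑ w ∈ s, t w * ‖w - x‖ ^ 2 = ∑ w ∈ s, t w * ‖w‖ ^ 2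
        - 2 * ∑ w ∈ s, t w * inner ℝ w x + (∑ w ∈ s, t w) * ‖x‖ ^ 2 := by
      rw [Finset.mul_sum, Finset.sum_mul, ← Finset.sum_sub_distrib, ← Finset.sum_add_distrib]
      refine Finset.sum_congr rfl fun w _ => ?_
      rw [norm_sub_sq_real]
      ring
    rw [hexp, hinner, ht1]
    linarith
  have hlow : ∀ w ∈ s, t w * (δ ^ 2 / 8 * ‖w - v‖) ≤ t w * ‖w - x‖ ^ 2 := by
    intro w hw
    refine mul_le_mul_of_nonneg_left ?_ (ht0 w hw)
    by_cases hwv : w = v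
    · simp [hwv]
    · have h1 : δ ≤ dist w v := hδ w hw v hv hwv
      have h2 : dist w v ≤ dist w x + dist v x := dist_triangle_right w v x
      have h3 : dist v x ≤ dist w x := hmin w hw
      have h4 : ‖w - v‖ ≤ 2 := (norm_sub_le w v).trans (by linarith [hnorm w hw, hnorm v hv])
      rw [← dist_eq_norm w x]
      nlinarith [sq_nonneg δ]
  calc δ ^ 2 / 8 * ‖x - v‖ = δ ^ 2 / 8 * ‖∑ w ∈ s, t w • (w - v)‖ := by
        simp [smul_sub, Finset.sum_sub_distrib, ← Finset.sum_smul, htx, ht1]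
    _ ≤ δ ^ 2 / 8 * ∑ w ∈ s, t w * ‖w - v‖ := by
        gcongr
        refine (norm_sum_le _ _).trans (Finset.sum_le_sum fun w hw => ?_)
        rw [norm_smul, Real.norm_of_nonneg (ht0 w hw)]
    _ = ∑ w ∈ s, t w * (δ ^ 2 / 8 * ‖w - v‖) := by
        rw [Finset.mul_sum]
        exact Finset.sum_congr rfl fun w _ => by ring
    _ ≤ _ := (Finset.sum_le_sum hlow).trans hvar

end Comparison

section Volume

open MeasureTheory Metric
open scoped Pointwise

variable {n : ℕ}

lemma integrableOn_norm_sub_rpow_ball (hn : 2 ≤ n) (v : EuclideanSpace ℝ (Fin n)) {r : ℝ}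
    (hr : 0 < r) :
    IntegrableOn (fun x => ‖x - v‖ ^ (-((n : ℝ) + 1) / 2)) (ball v r) := by
  have : NeZero n := ⟨by omega⟩
  have hn' : (2 : ℝ) ≤ n := by exact_mod_cast hn
  have h0 : IntegrableOn (fun x : EuclideanSpace ℝ (Fin n) => ‖x‖ ^ (-((n : ℝ) + 1) / 2))
      (ball 0 r) := by
    rw [integrableOn_fun_norm_addHaar volume (f := fun y : ℝ => y ^ (-((n : ℝ) + 1) / 2)),
      finrank_euclideanSpace_fin]
    have h := (intervalIntegral.integrableOn_Ioo_rpow_iff (s := ((n : ℝ) - 3) / 2) hr).2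
      (by linarith)
    refine h.congr_fun (fun y hy => ?_) measurableSet_Ioo
    simp only [smul_eq_mul]
    rw [← Real.rpow_natCast, ← Real.rpow_add hy.1, Nat.cast_sub (by omega)]
    congr 1
    push_cast
    ring
  rw [← integrable_indicator_iff measurableSet_ball] at h0 ⊢
  refine (h0.comp_sub_right v).congr (Filter.Eventually.of_forall fun x => ?_)
  simp [Set.indicator, dist_eq_norm]

/-- A subset of the open unit ball contained in the convex hull of finitely many points of the
closed unit ball has finite hyperbolic volume. -/
lemma hypVolume_lt_top_of_subset_convexHull (hn : 2 ≤ n)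
    (s : Finset (EuclideanSpace ℝ (Fin n)))
    (hs : (s : Set (EuclideanSpace ℝ (Fin n))) ⊆ closedBall 0 1)
    {A : Set (EuclideanSpace ℝ (Fin n))} (hA : A ⊆ ball 0 1)
    (hAs : A ⊆ convexHull ℝ (s : Set (EuclideanSpace ℝ (Fin n)))) :
    hypVolume n A < ⊤ := by
  have : NeZero n := ⟨by omega⟩
  obtain ⟨c, hc, hbound⟩ := exists_mul_norm_sub_le_one_sub_sq s hs
  set p : ℝ := -((n : ℝ) + 1) / 2 with hp
  have hp0 : p ≤ 0 := by
    have : (0 : ℝ) ≤ n := n.cast_nonneg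
    linarith
  set T : Set (EuclideanSpace ℝ (Fin n)) :=
    (ball 0 1 ∩ convexHull ℝ (s : Set (EuclideanSpace ℝ (Fin n)))) \ s
  have hTm : MeasurableSet T :=
    (measurableSet_ball.inter (s.finite_toSet.isClosed_convexHull ℝ).measurableSet).diff
      s.measurableSet
  have hATs : A ⊆ T ∪ s := fun x hx => by
    by_cases hxs : x ∈ (s : Set (EuclideanSpace ℝ (Fin n)))
    · exact Or.inr hxs
    · exact Or.inl ⟨⟨hA hx, hAs hx⟩, hxs⟩
  have hs0 : hypVolume n s = 0 :=
    withDensity_absolutelyContinuous _ _ (s.finite_toSet.measure_zero volume)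
  have hTfin : hypVolume n T < ⊤ := by
    rw [hypVolume, withDensity_apply _ hTm]
    calc ∫⁻ x in T, ENNReal.ofReal ((1 - ‖x‖ ^ 2) ^ p)
        ≤ ∫⁻ x in T, ∑ v ∈ s, ENNReal.ofReal (c ^ p * ‖x - v‖ ^ p) := by
          refine setLIntegral_mono' hTm fun x hx => ?_
          obtain ⟨v, hv, hxv⟩ := hbound x hx.1.2
          have hne : x ≠ v := fun h => hx.2 (h ▸ hv)
          have hpos : 0 < ‖x - v‖ := norm_pos_iff.2 (sub_ne_zero.2 hne)
          refine le_trans (ENNReal.ofReal_le_ofReal ?_)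
            (Finset.single_le_sum (f := fun v => ENNReal.ofReal (c ^ p * ‖x - v‖ ^ p))
              (fun _ _ => zero_le) hv)
          rw [← Real.mul_rpow hc.le hpos.le]
          exact Real.rpow_le_rpow_of_nonpos (by positivity) hxv hp0
      _ = ∑ v ∈ s, ∫⁻ x in T, ENNReal.ofReal (c ^ p * ‖x - v‖ ^ p) :=
          lintegral_finsetSum _ fun v _ => by fun_prop
      _ < ⊤ := by
          refine ENNReal.sum_lt_top.2 fun v hv => ?_
          have hsub : T ⊆ ball v 3 := fun x hx => by
            have h1 : ‖x‖ < 1 := by simpa using hx.1.1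
            have h2 : ‖v‖ ≤ 1 := by simpa using hs hv
            rw [mem_ball, dist_eq_norm]
            linarith [norm_sub_le x v]
          have hint := ((integrableOn_norm_sub_rpow_ball hn v (r := 3) (by norm_num)).mono_set
            hsub).const_mul (c ^ p)
          exact hint.lintegral_lt_top
  calc hypVolume n A ≤ hypVolume n (T ∪ s) := measure_mono hATs
    _ ≤ hypVolume n T + hypVolume n s := measure_union_le _ _
    _ < ⊤ := by simpa [hs0] using hTfin

/-- The open circular cone of apex `0` around the unit vector `z`, truncated by the unit sphere. -/
def truncatedCone (z : EuclideanSpace ℝ (Fin n)) (ε : ℝ) : Set (EuclideanSpace ℝ (Fin n)) :=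
  {x | ‖x‖ < 1 ∧ ‖x - ‖x‖ • z‖ < ε * ‖x‖}

lemma isOpen_truncatedCone (z : EuclideanSpace ℝ (Fin n)) (ε : ℝ) :
    IsOpen (truncatedCone z ε) :=
  IsOpen.and (isOpen_lt (by fun_prop) (by fun_prop)) (isOpen_lt (by fun_prop) (by fun_prop))

lemma volume_truncatedCone_pos {z : EuclideanSpace ℝ (Fin n)} (hz : ‖z‖ = 1) {ε : ℝ}
    (hε : 0 < ε) : 0 < volume (truncatedCone z ε) := by
  refine (isOpen_truncatedCone z ε).measure_pos volume ⟨(1 / 2 : ℝ) • z, ?_⟩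
  have h : ‖(1 / 2 : ℝ) • z‖ = 1 / 2 := by rw [norm_smul, hz]; norm_num
  refine ⟨by rw [h]; norm_num, ?_⟩
  rw [h, sub_self, norm_zero]
  positivity

lemma truncatedCone_subset_ball (z : EuclideanSpace ℝ (Fin n)) (ε : ℝ) :
    truncatedCone z ε ⊆ ball 0 1 := fun x hx => by simpa using hx.1

/-- The part of the truncated cone outside the ball of radius `r` has volume at least
`(1 - r) * volume C`. -/
lemma le_volume_truncatedCone_diff_ball (hn : 1 ≤ n) (z : EuclideanSpace ℝ (Fin n)) (ε : ℝ)
    {r : ℝ} (hr0 : 0 < r) (hr1 : r ≤ 1) :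
    ENNReal.ofReal (1 - r) * volume (truncatedCone z ε)
      ≤ volume (truncatedCone z ε \ ball 0 r) := by
  set V := volume (truncatedCone z ε)
  have hV : V ≠ ⊤ :=
    ((measure_mono (truncatedCone_subset_ball z ε)).trans_lt measure_ball_lt_top).ne
  have hinter : truncatedCone z ε ∩ ball 0 r ⊆ r • truncatedCone z ε := by
    rintro x ⟨hx, hxr⟩
    rw [Set.mem_smul_set_iff_inv_smul_mem₀ hr0.ne']
    have hxr' : ‖x‖ < r := by simpa using hxr
    have hnorm : ‖r⁻¹ • x‖ = r⁻¹ * ‖x‖ := by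
      rw [norm_smul, Real.norm_of_nonneg (by positivity)]
    refine ⟨?_, ?_⟩
    · rw [hnorm, inv_mul_lt_one₀ hr0]
      exact hxr'
    · rw [hnorm, mul_smul, ← smul_sub, norm_smul, Real.norm_of_nonneg (by positivity),
        mul_left_comm]
      exact mul_lt_mul_of_pos_left hx.2 (by positivity)
  have hle : volume (truncatedCone z ε ∩ ball 0 r) ≤ ENNReal.ofReal r * V := by
    refine (measure_mono hinter).trans ?_
    rw [Measure.addHaar_smul, finrank_euclideanSpace_fin, abs_of_nonneg (by positivity)]
    gcongr
    exact pow_le_of_le_one hr0.le hr1 (by omega)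
  have hsplit : V = volume (truncatedCone z ε ∩ ball 0 r)
      + volume (truncatedCone z ε \ ball 0 r) :=
    (measure_inter_add_sdiff _ measurableSet_ball).symm
  have hsum : ENNReal.ofReal (1 - r) * V + ENNReal.ofReal r * V = V := by
    rw [← add_mul, ← ENNReal.ofReal_add (by linarith) hr0.le]
    simp
  have hfin : ENNReal.ofReal r * V ≠ ⊤ := ENNReal.mul_ne_top ENNReal.ofReal_ne_top hV
  refine (ENNReal.add_le_add_iff_right hfin).1 ?_
  rw [hsum]
  nth_rewrite 1 [hsplit]
  rw [add_comm]
  gcongr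

/-- Every neighbourhood of a boundary point has infinite hyperbolic volume. -/
lemma hypVolume_ball_inter_eq_top (hn : 2 ≤ n) {z : EuclideanSpace ℝ (Fin n)} (hz : ‖z‖ = 1)
    {ε : ℝ} (hε : 0 < ε) : hypVolume n (ball z ε ∩ ball 0 1) = ⊤ := by
  have hn' : (2 : ℝ) ≤ n := by exact_mod_cast hn
  set C := truncatedCone z (ε / 2)
  have hVpos : 0 < volume C := volume_truncatedCone_pos hz (by positivity)
  have hbound : ∀ᶠ h : ℝ in nhdsWithin 0 (Set.Ioi 0),
      ENNReal.ofReal (1 / 2 * h ^ (-(1 / 2) : ℝ)) * volume C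
        ≤ hypVolume n (ball z ε ∩ ball 0 1) := by
    filter_upwards [Ioo_mem_nhdsGT (show 0 < min 1 ε by positivity)] with h ⟨h0, hlt⟩
    have h1 : h < 1 := hlt.trans_le (min_le_left _ _)
    have h2 : h < ε := hlt.trans_le (min_le_right _ _)
    set S := C \ ball 0 (1 - h / 2)
    have hSm : MeasurableSet S :=
      (isOpen_truncatedCone z _).measurableSet.diff measurableSet_ball
    have hSsub : S ⊆ ball z ε ∩ ball 0 1 := by
      intro x hx
      have hxr : 1 - h / 2 ≤ ‖x‖ := by simpa using hx.2
      have hx1 : ‖x‖ < 1 := hx.1.1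
      refine ⟨?_, truncatedCone_subset_ball z _ hx.1⟩
      have hz' : ‖‖x‖ • z - z‖ = 1 - ‖x‖ := by
        rw [show ‖x‖ • z - z = (‖x‖ - 1) • z by rw [sub_smul, one_smul], norm_smul, hz, mul_one,
          Real.norm_eq_abs, abs_of_nonpos (by linarith)]
        ring
      have hx2 : ‖x - ‖x‖ • z‖ < ε / 2 * ‖x‖ := hx.1.2
      rw [mem_ball, dist_eq_norm]
      have := norm_sub_le_norm_sub_add_norm_sub x (‖x‖ • z) z
      nlinarith
    calc ENNReal.ofReal (1 / 2 * h ^ (-(1 / 2) : ℝ)) * volume C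
        = ENNReal.ofReal (h ^ (-(3 / 2) : ℝ)) *
            (ENNReal.ofReal (1 - (1 - h / 2)) * volume C) := by
          rw [← mul_assoc, ← ENNReal.ofReal_mul (by positivity)]
          congr 2
          rw [show (-(1 / 2) : ℝ) = -(3 / 2) + 1 by norm_num, Real.rpow_add h0, Real.rpow_one]
          ring
      _ ≤ ENNReal.ofReal (h ^ (-(3 / 2) : ℝ)) * volume S := by
          gcongr
          exact le_volume_truncatedCone_diff_ball (by omega) z _ (by linarith) (by linarith)
      _ = ∫⁻ _ in S, ENNReal.ofReal (h ^ (-(3 / 2) : ℝ)) := (setLIntegral_const _ _).symm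
      _ ≤ ∫⁻ x in S, ENNReal.ofReal ((1 - ‖x‖ ^ 2) ^ (-((n : ℝ) + 1) / 2)) := by
          refine setLIntegral_mono' hSm fun x hx => ENNReal.ofReal_le_ofReal ?_
          have hxr : 1 - h / 2 ≤ ‖x‖ := by simpa using hx.2
          have hx1 : ‖x‖ < 1 := hx.1.1
          have hpos : 0 < 1 - ‖x‖ ^ 2 := by nlinarith
          have hle : 1 - ‖x‖ ^ 2 ≤ h := by nlinarith
          calc h ^ (-(3 / 2) : ℝ) ≤ h ^ (-((n : ℝ) + 1) / 2) :=
                Real.rpow_le_rpow_of_exponent_ge h0 h1.le (by linarith)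
            _ ≤ _ := Real.rpow_le_rpow_of_nonpos hpos hle (by linarith)
      _ ≤ hypVolume n S := withDensity_apply_le _ _
      _ ≤ _ := measure_mono hSsub
  have hlim : Filter.Tendsto
      (fun h : ℝ => ENNReal.ofReal (1 / 2 * h ^ (-(1 / 2) : ℝ)) * volume C)
      (nhdsWithin 0 (Set.Ioi 0)) (nhds ⊤) := by
    rw [← ENNReal.top_mul hVpos.ne']
    refine ENNReal.Tendsto.mul_const (ENNReal.tendsto_ofReal_nhds_top.2 ?_) (Or.inl (by simp))
    exact (tendsto_rpow_neg_nhdsGT_zero (by norm_num)).const_mul_atTop (by norm_num)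
  exact top_le_iff.1 (le_of_tendsto hlim hbound)

end Volume

namespace HypPolyhedron

variable {n : ℕ} (P : HypPolyhedron n)

/-- The linear part of the `i`-th inequality of the polyhedron in the Klein model. -/
def kleinNormal (i : Fin P.m) : EuclideanSpace ℝ (Fin n) →L[ℝ] ℝ :=
  innerSL ℝ (WithLp.toLp 2 fun j => P.e i j.succ)

/-- The Euclidean polyhedral set which cuts out the polyhedron in the Klein model. -/
def euclideanPolyhedron : Set (EuclideanSpace ℝ (Fin n)) :=
  {y | ∀ i, P.kleinNormal i y ≤ P.e i 0}

lemma kleinNormal_apply (i : Fin P.m) (y : EuclideanSpace ℝ (Fin n)) :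
    P.kleinNormal i y = ∑ j, P.e i j.succ * y j := by
  simp [kleinNormal, PiLp.inner_apply, mul_comm]

lemma mink_eq_mul_kleinNormal_sub (i : Fin P.m) {x : Fin (n + 1) → ℝ} (hx : 0 < x 0) :
    mink (P.e i) x = x 0 * (P.kleinNormal i (kleinMap x) - P.e i 0) := by
  have h : ∀ j : Fin n, x 0 * (P.e i j.succ * (x j.succ / x 0)) = P.e i j.succ * x j.succ :=
    fun j => by field_simp
  simp only [mink, kleinNormal_apply, kleinMap, mul_sub, Finset.mul_sum, h]
  ring

lemma image_carrier :
    kleinMap '' P.carrier = P.euclideanPolyhedron ∩ Metric.ball 0 1 := by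
  ext y
  rw [Set.mem_inter_iff, mem_ball_zero_iff]
  constructor
  · rintro ⟨x, ⟨⟨hx, hx0⟩, hxP⟩, rfl⟩
    refine ⟨fun i => ?_, ?_⟩
    · have h := hxP i
      rw [P.mink_eq_mul_kleinNormal_sub i hx0] at h
      exact sub_nonpos.1 (nonpos_of_mul_nonpos_right h hx0)
    · have hsq : ‖kleinMap x‖ ^ 2 < 1 := by
        rw [EuclideanSpace.real_norm_sq_eq]
        simp only [kleinMap, div_pow]
        rw [← Finset.sum_div, div_lt_one (by positivity)]
        simp only [mink, ← pow_two] at hx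
        linarith
      exact (sq_lt_one_iff₀ (norm_nonneg _)).1 hsq
  · rintro ⟨hyP, hy⟩
    have hsq : ‖y‖ ^ 2 < 1 := (sq_lt_one_iff₀ (norm_nonneg _)).2 hy
    have hpos : 0 < Real.sqrt (1 - ‖y‖ ^ 2) := Real.sqrt_pos.2 (by linarith)
    set c := (Real.sqrt (1 - ‖y‖ ^ 2))⁻¹ with hc
    have hc0 : 0 < c := inv_pos.2 hpos
    have hc2 : c ^ 2 * (1 - ‖y‖ ^ 2) = 1 := by
      rw [hc, inv_pow, Real.sq_sqrt (by linarith), inv_mul_cancel₀ (by linarith)]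
    set x : Fin (n + 1) → ℝ := Fin.cons c fun j => c * y j
    have hx0 : x 0 = c := rfl
    have hxs : ∀ j : Fin n, x j.succ = c * y j := fun j => rfl
    have hxy : kleinMap x = y := by
      ext j
      simp only [kleinMap, hx0, hxs]
      field_simp
    refine ⟨x, ⟨⟨?_, hc0⟩, fun i => ?_⟩, hxy⟩
    · have hsum : ∑ j : Fin n, c * y j * (c * y j) = c ^ 2 * ‖y‖ ^ 2 := by
        rw [EuclideanSpace.real_norm_sq_eq, Finset.mul_sum]
        exact Finset.sum_congr rfl fun j _ => by ring
      simp only [mink, hx0, hxs, hsum]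
      linarith
    · rw [P.mink_eq_mul_kleinNormal_sub i hc0, hxy]
      exact mul_nonpos_of_nonneg_of_nonpos hc0.le (sub_nonpos.2 (hyP i))

lemma convex_euclideanPolyhedron : Convex ℝ P.euclideanPolyhedron := by
  simp only [euclideanPolyhedron, Set.ofPred_forall]
  exact convex_iInter fun i => convex_halfSpace_le (P.kleinNormal i).isLinear _

lemma isClosed_euclideanPolyhedron : IsClosed P.euclideanPolyhedron := by
  simp only [euclideanPolyhedron, Set.ofPred_forall]
  exact isClosed_iInter fun i => isClosed_le (P.kleinNormal i).continuous continuous_const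

lemma exists_mem_interior_euclideanPolyhedron :
    ∃ p ∈ interior P.euclideanPolyhedron, ‖p‖ < 1 := by
  obtain ⟨p, hp⟩ := P.nonempty_int
  change p ∈ interior (kleinMap '' P.carrier) at hp
  rw [image_carrier] at hp
  exact ⟨p, interior_mono Set.inter_subset_left hp, by simpa using (interior_subset hp).2⟩

/-- A polyhedral set cutting out a polyhedron of finite volume lies in the closed unit ball. -/
lemma euclideanPolyhedron_subset_closedBall (hn : 2 ≤ n)
    (hvol : hypVolume n (kleinMap '' P.carrier) < ⊤) :
    P.euclideanPolyhedron ⊆ Metric.closedBall 0 1 := by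
  intro y hy
  rw [mem_closedBall_zero_iff]
  by_contra! hy1
  obtain ⟨p, hp, hp1⟩ := P.exists_mem_interior_euclideanPolyhedron
  have hcont : ContinuousOn (fun t : ℝ => ‖AffineMap.lineMap p y t‖) (Set.Icc 0 1) := by
    simp only [AffineMap.lineMap_apply_module]
    fun_prop
  obtain ⟨t, ht, htn⟩ := intermediate_value_Ioo zero_le_one hcont
    (show (1 : ℝ) ∈ Set.Ioo _ _ by simpa using ⟨hp1, hy1⟩)
  have hz : AffineMap.lineMap p y t ∈ interior P.euclideanPolyhedron := by
    refine P.convex_euclideanPolyhedron.openSegment_interior_self_subset_interior hp hy ?_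
    rw [openSegment_eq_image_lineMap]
    exact ⟨t, ht, rfl⟩
  obtain ⟨ε, hε, hball⟩ := Metric.mem_nhds_iff.1 (mem_interior_iff_mem_nhds.1 hz)
  rw [image_carrier] at hvol
  refine (hvol.trans_le' ?_).ne (hypVolume_ball_inter_eq_top hn htn hε)
  exact MeasureTheory.measure_mono (Set.inter_subset_inter_left _ hball)

lemma closure_image_carrier_of_subset_closedBall (hn : 1 ≤ n)
    (hP : P.euclideanPolyhedron ⊆ Metric.closedBall 0 1) :
    closure (kleinMap '' P.carrier) = P.euclideanPolyhedron := by
  have : NeZero n := ⟨by omega⟩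
  rw [image_carrier]
  refine (closure_minimal Set.inter_subset_left P.isClosed_euclideanPolyhedron).antisymm ?_
  obtain ⟨p, hp, -⟩ := P.exists_mem_interior_euclideanPolyhedron
  have hcl := P.convex_euclideanPolyhedron.closure_interior_eq_closure_of_nonempty_interior ⟨p, hp⟩
  rw [P.isClosed_euclideanPolyhedron.closure_eq] at hcl
  nth_rewrite 1 [← hcl]
  refine closure_mono (Set.subset_inter interior_subset ?_)
  rw [← interior_closedBall (0 : EuclideanSpace ℝ (Fin n)) one_ne_zero]
  exact interior_mono hP

end HypPolyhedron

/-- A convex hyperbolic `n`-polyhedron has finite hyperbolic volume if and only if its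
closure in `ℝⁿ` is the convex hull of a finite set of points of the closed unit ball
(equivalently, of its vertices). -/
theorem finite_volume_iff_convex_hull_of_finitely_many_points (n : ℕ) (hn : 2 ≤ n)
    (P : HypPolyhedron n) :
    hypVolume n (kleinMap '' P.carrier) < ⊤ ↔
      ∃ s : Finset (EuclideanSpace ℝ (Fin n)),
        (s : Set (EuclideanSpace ℝ (Fin n))) ⊆ Metric.closedBall 0 1 ∧
        closure (kleinMap '' P.carrier)
          = convexHull ℝ (s : Set (EuclideanSpace ℝ (Fin n))) := by
  constructor
  · intro hvol
    have hsub := P.euclideanPolyhedron_subset_closedBall hn hvol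
    obtain ⟨s, hs, hs'⟩ := exists_finset_convexHull_eq_polyhedron P.kleinNormal (fun i => P.e i 0)
      ((isCompact_closedBall 0 1).of_isClosed_subset P.isClosed_euclideanPolyhedron hsub)
      P.convex_euclideanPolyhedron
    exact ⟨s, hs.trans hsub,
      (P.closure_image_carrier_of_subset_closedBall (by omega) hsub).trans hs'⟩
  · rintro ⟨s, hs, hcl⟩
    refine hypVolume_lt_top_of_subset_convexHull hn s hs ?_ (hcl ▸ subset_closure)
    rw [P.image_carrier]
    exact Set.inter_subset_right
end
end
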